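/- Let g = s ⋉ h be a finite-dimensional sympathetic complex Lie algebra that is not semisimple, with simple Levi subalgebra s, whose radical h decomposes into simple s-modules satisfying the convention, and assume that if this decomposition has 5 or more summands then Z(h) is irreducible as an s-module. Then dim_C g ≥ 15. -/

import Mathlib

namespace Symp

variable (g : Type*) [LieRing g] [LieAlgebra ℂ g]

/-- A derivation of `g` is inner if it is given by the adjoint action of some element. -/
def IsInnerDer {g : Type*} [LieRing g] [LieAlgebra ℂ g] (D : LieDerivation ℂ g g) : Prop :=
  ∃ x : g, ∀ y : g, D y = ⁅x, y⁆

/-- `g` is perfect: `[g,g] = g`. -/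
def IsPerfectLie : Prop :=
  ⁅(⊤ : LieIdeal ℂ g), (⊤ : LieIdeal ℂ g)⁆ = ⊤

/-- A sympathetic Lie algebra: trivial centre, perfect, all derivations inner. -/
def IsSympathetic : Prop :=
  LieAlgebra.center ℂ g = ⊥ ∧ IsPerfectLie g ∧
    ∀ D : LieDerivation ℂ g g, IsInnerDer D

/-- `s` is a simple Levi subalgebra of `g`: it is a simple Lie algebra and a vector-space
complement to the radical. -/
def IsSimpleLevi (s : LieSubalgebra ℂ g) : Prop :=
  LieAlgebra.IsSimple ℂ s ∧
    IsCompl s.toSubmodule (LieAlgebra.radical ℂ g).toSubmodule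

/-- `s` is a Levi subalgebra of `g` isomorphic to `sl₂(ℂ)`. -/
def IsSl2Levi (s : LieSubalgebra ℂ g) : Prop :=
  Nonempty (s ≃ₗ⁅ℂ⁆ LieAlgebra.SpecialLinear.sl (Fin 2) ℂ) ∧
    IsCompl s.toSubmodule (LieAlgebra.radical ℂ g).toSubmodule

/-- The subspace spanned by all brackets `⁅x, y⁆` with `x ∈ A`, `y ∈ B`. -/
def lieSpan2 (A B : Submodule ℂ g) : Submodule ℂ g :=
  Submodule.span ℂ {z : g | ∃ x ∈ A, ∃ y ∈ B, z = ⁅x, y⁆}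

/-- A subspace of `g` invariant under the bracket action of the subalgebra `s`. -/
def Invariant (s : LieSubalgebra ℂ g) (W : Submodule ℂ g) : Prop :=
  ∀ x ∈ s, ∀ w ∈ W, ⁅x, w⁆ ∈ W

/-- `V` is an irreducible `s`-submodule of `g`. -/
def IsIrreducibleSMod (s : LieSubalgebra ℂ g) (V : Submodule ℂ g) : Prop :=
  V ≠ ⊥ ∧ Invariant g s V ∧
    ∀ W : Submodule ℂ g, W ≤ V → Invariant g s W → W = ⊥ ∨ W = V

/-- The family `V` is a decomposition of the radical of `g` into irreducible `s`-modules. -/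
def IsDecomp (s : LieSubalgebra ℂ g) {k : ℕ} (V : Fin k → Submodule ℂ g) : Prop :=
  (∀ i, IsIrreducibleSMod g s (V i)) ∧ iSupIndep V ∧
    (⨆ i, V i) = (LieAlgebra.radical ℂ g).toSubmodule

/-- The convention: any nonzero bracket of two of the modules equals one of them,
for a unique index. -/
def Convention {k : ℕ} (V : Fin k → Submodule ℂ g) : Prop :=
  ∀ i j, lieSpan2 g (V i) (V j) ≠ ⊥ → ∃! q, lieSpan2 g (V i) (V j) = V q

/-- The centre `Z(h)` of the radical `h = Rad(g)`, as a subspace of `g`. -/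
def centerRad : Submodule ℂ g where
  carrier := {x | x ∈ LieAlgebra.radical ℂ g ∧ ∀ y ∈ LieAlgebra.radical ℂ g, ⁅x, y⁆ = 0}
  add_mem' := by
    rintro a b ⟨ha, ha'⟩ ⟨hb, hb'⟩
    exact ⟨add_mem ha hb, fun y hy => by rw [add_lie, ha' y hy, hb' y hy, add_zero]⟩
  zero_mem' := ⟨zero_mem _, fun y _ => zero_lie y⟩
  smul_mem' := by
    rintro c a ⟨ha, ha'⟩
    exact ⟨SMulMemClass.smul_mem c ha, fun y hy => by rw [smul_lie, ha' y hy, smul_zero]⟩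

/-- The derived subalgebra `[h,h]` of the radical `h = Rad(g)`, as a subspace of `g`. -/
def derivedRad : Submodule ℂ g :=
  lieSpan2 g (LieAlgebra.radical ℂ g).toSubmodule (LieAlgebra.radical ℂ g).toSubmodule

end Symp

/-!
Let `n i = dim V i`. If the Levi factor `s` is larger than `𝔰𝔩₂`, then `dim s ≥ 8` and `s` has no
two-dimensional simple module, so that two generators of the radical and one bracket give
`15 ≤ 8 + 3 + 3 + 1`. If `s = 𝔰𝔩₂`, then `∑ n i ≥ 12` has to be shown. This is a finite
combinatorial problem about the relation `[V i, V j] = V q`: scaling the `V i` by weights which are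
additive along this relation is a derivation, hence inner, hence zero. Therefore every such weight
vanishes, which prevents the radical from being graded by the depth in its lower central series and
forces enough summands of each parity. What remains, with `∑ n i ≤ 11`, is excluded by the Jacobi
identity together with a few facts about `𝔰𝔩₂`-modules of dimension at most three. The most
delicate of these is `weight_one_cubic`: when all `n i ≤ 2`, the trilinear map `⁅⁅x, ⁅F, y⁆⁆, w⁆`
on vectors of weight one is symmetric and, its values being controlled by a cubic form `c`,
satisfies `c(x, x, x) ⁅⁅v, ⁅F, x⁆⁆, x⁆ = 0`; as polynomials have no zero divisors, one of the two
factors vanishes identically.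
-/

namespace Symp

/-! ### Bracket tables -/

/-- `IsNested R m q` says that `q` is the output of a right-nested bracket of `m + 1` factors. -/
def IsNested {ι : Type*} (R : ι → ι → ι → Prop) : ℕ → ι → Prop
  | 0, _ => True
  | m + 1, q => ∃ i j, IsNested R m j ∧ R i j q

theorem IsNested.antitone {ι : Type*} {R : ι → ι → ι → Prop} : Antitone (IsNested R) := by
  refine antitone_nat_of_succ_le fun m => ?_
  induction m with
  | zero => exact fun _ _ => trivial
  | succ m ih => exact fun q ⟨i, j, hj, hr⟩ => ⟨i, j, ih j hj, hr⟩

/-- The bracket table of a decomposition `⨁ V i` of the radical: `n i` stands for `dim V i` and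
`R i j q` for `0 ≠ [V i, V j] = V q`. The fields record what the table inherits from a sympathetic
Lie algebra; `weight_eq_zero` reflects that the derivation scaling each `V i` by `w i` is inner. -/
structure BracketTable {ι : Type*} (n : ι → ℕ) (R : ι → ι → ι → Prop) : Prop where
  nonempty : Nonempty ι
  pos : ∀ i, 1 ≤ n i
  symm : ∀ {i j q}, R i j q → R j i q
  unique : ∀ {i j q q'}, R i j q → R i j q' → q = q'
  jacobi : ∀ {i j l m r}, R j l m → R i m r →
    (∃ p, R i j p ∧ R p l r) ∨ (∃ p, R i l p ∧ R p j r)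
  nilpotent : ∃ N, ∀ q, ¬ IsNested R N q
  two_le_of_not_output : ∀ i, (∀ a b, ¬ R a b i) → 2 ≤ n i
  acts_of_eq_one : ∀ i, n i = 1 → ∃ j q, R i j q
  weight_eq_zero : ∀ w : ι → ℤ, (∀ i j q, R i j q → w i + w j = w q) → ∀ i, w i = 0

namespace BracketTable

variable {ι : Type*} {n : ι → ℕ} {R : ι → ι → ι → Prop}

open Classical in
/-- The depth of `V q` in the lower central series of the radical, starting from `1` for the
modules that are not brackets. -/
noncomputable def depth (h : BracketTable n R) (q : ι) : ℕ :=
  Nat.find (p := fun m => ¬ IsNested R m q) (h.nilpotent.imp fun _ hN => hN q)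

theorem isNested_iff_lt_depth (h : BracketTable n R) {m : ℕ} {q : ι} :
    IsNested R m q ↔ m < h.depth q := by
  simp only [depth, Nat.lt_find_iff, not_not]
  exact ⟨fun hm k hk => IsNested.antitone hk q hm, fun hm => hm m le_rfl⟩

theorem depth_pos (h : BracketTable n R) (q : ι) : 1 ≤ h.depth q :=
  (h.isNested_iff_lt_depth (m := 0)).1 trivial

theorem isNested_add (h : BracketTable n R) {a b : ℕ} {i j q : ι} (hi : IsNested R a i)
    (hj : IsNested R b j) (hr : R i j q) : IsNested R (a + b + 1) q := by
  induction a generalizing b i j q with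
  | zero => rw [Nat.zero_add]; exact ⟨i, j, hj, hr⟩
  | succ a ih =>
    obtain ⟨x, y, hy, hxy⟩ := hi
    rcases h.jacobi hxy (h.symm hr) with ⟨p, hp, hpq⟩ | ⟨p, hp, hpq⟩
    · have := ih hy (b := b + 1) ⟨x, j, hj, h.symm hp⟩ (h.symm hpq)
      rwa [Nat.add_right_comm a 1 b]
    · rw [Nat.add_right_comm a 1 b]
      exact ⟨x, p, ih hy hj (h.symm hp), h.symm hpq⟩

theorem depth_add_le (h : BracketTable n R) {i j q} (hr : R i j q) :
    h.depth i + h.depth j ≤ h.depth q := by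
  have hi := h.depth_pos i
  have hj := h.depth_pos j
  have := h.isNested_iff_lt_depth.1 <| h.isNested_add (h.isNested_iff_lt_depth.2
    (Nat.sub_lt hi one_pos)) (h.isNested_iff_lt_depth.2 (Nat.sub_lt hj one_pos)) hr
  omega

theorem depth_lt (h : BracketTable n R) {i j q} (hr : R i j q) :
    h.depth i < h.depth q ∧ h.depth j < h.depth q := by
  have := h.depth_add_le hr
  have := h.depth_pos i
  have := h.depth_pos j
  omega

theorem exists_gen_of_two_le_depth (h : BracketTable n R) {q} (hq : 2 ≤ h.depth q) :
    ∃ g x, h.depth g = 1 ∧ h.depth x + 1 = h.depth q ∧ R g x q := by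
  obtain ⟨m, hm⟩ : ∃ m, h.depth q = m + 2 := ⟨h.depth q - 2, by omega⟩
  obtain ⟨i, j, hj, hr⟩ : IsNested R (m + 1) q := h.isNested_iff_lt_depth.2 (by omega)
  rw [h.isNested_iff_lt_depth] at hj
  have := h.depth_add_le hr
  have := h.depth_pos i
  exact ⟨i, j, by omega, by omega, hr⟩

theorem two_le_of_depth_eq_one (h : BracketTable n R) {i} (hi : h.depth i = 1) : 2 ≤ n i := by
  refine h.two_le_of_not_output i fun a b hr => ?_
  have := h.depth_lt hr
  have := h.depth_pos a
  omega

theorem two_le_depth_of_eq_one (h : BracketTable n R) {t} (ht : n t = 1) : 2 ≤ h.depth t := by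
  have := h.depth_pos t
  have := h.two_le_of_depth_eq_one (i := t)
  omega

/-- Induction along the depth: a property of generators that passes from `x` to `[g, x]` for every
generator `g` holds everywhere. -/
theorem depth_induction (h : BracketTable n R) {p : ι → Prop} (gen : ∀ g, h.depth g = 1 → p g)
    (lie : ∀ g x q, h.depth g = 1 → h.depth x + 1 = h.depth q → R g x q → p x → p q) (i : ι) :
    p i := by
  obtain ⟨N, hN⟩ : ∃ N, h.depth i = N := ⟨_, rfl⟩
  induction N generalizing i with
  | zero => have := h.depth_pos i; omega
  | succ N ih =>
    by_cases h1 : h.depth i = 1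
    · exact gen i h1
    · obtain ⟨g, x, hg, hx, hr⟩ := h.exists_gen_of_two_le_depth (q := i) (by
        have := h.depth_pos i; omega)
      exact lie g x i hg hx hr (ih x (by omega))

theorem weight_eq_zero_of_gen (h : BracketTable n R) (w : ι → ℤ)
    (hw : ∀ g x q, h.depth g = 1 → R g x q → w g + w x = w q) (i : ι) : w i = 0 := by
  refine h.weight_eq_zero w (fun i => ?_) i
  induction i using h.depth_induction with
  | gen g hg => exact fun j q => hw g j q hg
  | lie g x i hg _ hgx ih =>
    intro j q hr
    have e := hw _ _ _ hg hgx
    rcases h.jacobi hgx (h.symm hr) with ⟨p, h1, h2⟩ | ⟨p, h1, h2⟩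
    · linarith [hw _ _ _ hg (h.symm h1), ih _ _ (h.symm h2)]
    · linarith [hw _ _ _ hg (h.symm h2), ih _ _ (h.symm h1)]

theorem exists_gen_acts (h : BracketTable n R) {i} (hi : n i = 1) :
    ∃ g q, h.depth g = 1 ∧ R g i q := by
  obtain ⟨j, q, hr⟩ := h.acts_of_eq_one i hi
  induction j using h.depth_induction generalizing q with
  | gen g hg => exact ⟨g, q, hg, h.symm hr⟩
  | lie g x j hg _ hgx ih =>
    rcases h.jacobi hgx hr with ⟨p, h1, -⟩ | ⟨p, h1, -⟩
    · exact ⟨g, p, hg, h.symm h1⟩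
    · exact ih _ h1

theorem exists_depth_eq (h : BracketTable n R) {m : ℕ} (hm : 1 ≤ m) {q} (hq : m ≤ h.depth q) :
    ∃ y, h.depth y = m := by
  induction q using h.depth_induction with
  | gen g hg => exact ⟨g, by omega⟩
  | lie g x q _ hx _ ih =>
    by_cases hlt : m ≤ h.depth x
    · exact ih hlt
    · exact ⟨q, by omega⟩

/-- Otherwise the depth would be an additive weight. -/
theorem exists_depth_jump (h : BracketTable n R) :
    ∃ g x q, h.depth g = 1 ∧ R g x q ∧ h.depth x + 2 ≤ h.depth q := by
  by_contra! hc
  obtain ⟨i⟩ := h.nonempty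
  have hi := h.weight_eq_zero_of_gen (fun i => (h.depth i : ℤ)) (fun g x q hg hr => by
    have := hc g x q hg hr
    have := h.depth_lt hr
    omega) i
  have := h.depth_pos i
  omega

theorem eq_of_depth_eq (h : BracketTable n R) {A} (hA : ∀ i, h.depth i = 1 → i = A) (x : ι) :
    ∀ y, h.depth x = h.depth y → x = y := by
  induction x using h.depth_induction with
  | gen g hg => exact fun y hy => by rw [hA g hg, hA y (by omega)]
  | lie g a x hg ha hr ih =>
    intro y hy
    have := h.depth_pos a
    obtain ⟨g', a', hg', ha', hr'⟩ := h.exists_gen_of_two_le_depth (q := y) (by omega)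
    obtain rfl := ih a' (by omega)
    obtain rfl : g = g' := by rw [hA g hg, hA g' hg']
    exact h.unique hr hr'

theorem exists_two_gens (h : BracketTable n R) :
    ∃ A B, A ≠ B ∧ h.depth A = 1 ∧ h.depth B = 1 := by
  obtain ⟨g, x, q, hg, hr, hd⟩ := h.exists_depth_jump
  by_contra! hc
  have hA : ∀ i, h.depth i = 1 → i = g := fun i hi => by
    by_contra hne
    exact hc i g hne hi hg
  have := h.depth_pos x
  obtain ⟨y, hy⟩ := h.exists_depth_eq (m := h.depth x + 1) (by omega) (q := q) (by omega)
  obtain ⟨g', x', hg', hx', hr'⟩ := h.exists_gen_of_two_le_depth (q := y) (by omega)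
  obtain rfl := h.eq_of_depth_eq hA x' x (by omega)
  rw [hA _ hg'] at hr'
  obtain rfl := h.unique hr hr'
  omega

theorem exists_top (h : BracketTable n R) [Finite ι] :
    ∃ Z, (∀ i, h.depth i ≤ h.depth Z) ∧ 3 ≤ h.depth Z := by
  have := h.nonempty
  obtain ⟨Z, hZ⟩ := Finite.exists_max h.depth
  obtain ⟨g, x, q, -, -, hd⟩ := h.exists_depth_jump
  have := h.depth_pos x
  exact ⟨Z, hZ, by have := hZ q; omega⟩

theorem nodup_cons_cons (h : BracketTable n R) {A B : ι} (hAB : A ≠ B) (hA : h.depth A = 1)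
    (hB : h.depth B = 1) {l : List ι} (hl : ((B :: l).map h.depth).Pairwise (· < ·)) :
    (A :: B :: l).Nodup := by
  refine List.nodup_cons.2 ⟨fun hmem => ?_, .of_map h.depth (hl.imp fun hab => hab.ne)⟩
  simp only [List.map_cons, List.pairwise_cons, List.mem_map, forall_exists_index, and_imp,
    forall_apply_eq_imp_iff₂] at hl
  have := hl.1 A ((List.mem_cons.1 hmem).resolve_left hAB)
  omega

section Top

variable {h : BracketTable n R} {Z : ι} (hZ : ∀ i, h.depth i ≤ h.depth Z)
include hZ

theorem not_rel_top_left (i q : ι) : ¬ R Z i q := fun hr =>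
  (h.depth_lt hr).1.not_ge (hZ q)

theorem not_rel_top_right (i q : ι) : ¬ R i Z q := fun hr =>
  (h.depth_lt hr).2.not_ge (hZ q)

theorem two_le_top {i} (hi : h.depth i = h.depth Z) : 2 ≤ n i := by
  by_contra hlt
  have := h.pos i
  obtain ⟨j, q, hr⟩ := h.acts_of_eq_one i (by omega)
  exact not_rel_top_left (fun k => hi ▸ hZ k) _ _ hr

end Top

end BracketTable

theorem sum_map_le_sum_univ {ι : Type*} [Fintype ι] (n : ι → ℕ) {l : List ι} (hl : l.Nodup) :
    (l.map n).sum ≤ ∑ i, n i := by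
  classical
  rw [← List.sum_toFinset n hl]
  exact Finset.sum_le_sum_of_subset (Finset.subset_univ _)

theorem mem_of_sum_univ_lt {ι : Type*} [Fintype ι] (n : ι → ℕ) {l : List ι} (hl : l.Nodup) {i : ι}
    (hi : ∑ j, n j < n i + (l.map n).sum) : i ∈ l := by
  by_contra hmem
  exact (sum_map_le_sum_univ n (List.nodup_cons.2 ⟨hmem, hl⟩)).not_gt hi

theorem BracketTable.seven_le_sum {ι : Type*} [Fintype ι] {n : ι → ℕ} {R : ι → ι → ι → Prop}
    (h : BracketTable n R) (hn : ∀ i, n i ≠ 2) : 7 ≤ ∑ i, n i := by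
  obtain ⟨A, B, hAB, hA, hB⟩ := h.exists_two_gens
  obtain ⟨g, x, q, -, -, hq⟩ := h.exists_depth_jump
  have := sum_map_le_sum_univ n (h.nodup_cons_cons hAB hA hB (l := [q]) (by simp; omega))
  simp only [List.map_cons, List.map_nil, List.sum_cons, List.sum_nil] at this
  have := h.two_le_of_depth_eq_one hA
  have := h.two_le_of_depth_eq_one hB
  have := hn A
  have := hn B
  have := h.pos q
  omega

/-! ### Bracket tables over `𝔰𝔩₂` -/

/-- A bracket table together with what `𝔰𝔩₂` representation theory adds when the Levi factor is
`𝔰𝔩₂`. In `weight_one_cubic`, `G` is a set of two-dimensional modules whose iterated brackets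
`[[G, G], G]` only meet `V c` and central modules. -/
structure Sl2Table {ι : Type*} (n : ι → ℕ) (R : ι → ι → ι → Prop) : Prop
    extends BracketTable n R where
  parity : ∀ {i j q}, R i j q → (n i + n j + n q) % 2 = 1
  dim_eq_of_trivial : ∀ {t i q}, n t = 1 → R t i q → n q = n i
  dim_eq_of_trivial_output : ∀ {i j t}, n t = 1 → R i j t → n i = n j
  dim_self_of_two : ∀ {i q}, n i = 2 → R i i q → n q = 1
  dim_self_of_three : ∀ {i q}, n i = 3 → R i i q → n q = 3
  self_rel_of_trivial : ∀ {u w t y}, n t = 1 → 2 ≤ n u → R u w t → R u t y →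
    ∃ p, R u u p ∧ R p w y
  self_rel_of_three : ∀ {a b c z}, n b = 3 → n a = 2 → n c = 2 → R b a c → R b c z → ∃ q, R b b q
  dim_ne_one_of_self : ∀ {a t c r}, n a = 2 → n t = 1 → R a a t → R a t c → R a c r → n r ≠ 1
  weight_one_cubic : (∀ i, n i ≤ 2) → ∀ {G : Set ι} {c}, n c = 2 → (∀ g ∈ G, n g = 2) →
    (∀ g ∈ G, ∀ g' ∈ G, ∀ t, R g g' t → ∀ g'' ∈ G, ∀ q, R t g'' q → q = c ∨ ∀ i r, ¬ R q i r) →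
    (∃ g ∈ G, ∃ g' ∈ G, ∃ t, R g g' t ∧ ∃ g'' ∈ G, R t g'' c) →
    ∀ g ∈ G, ∀ t, R c g t → ∀ g' ∈ G, ∀ q, ¬ R t g' q

namespace Sl2Table

variable {ι : Type*} {n : ι → ℕ} {R : ι → ι → ι → Prop}

theorem exists_even_rel (h : Sl2Table n R) {i} (hi : n i % 2 = 0) :
    ∃ g x q, h.depth g = 1 ∧ R g x q ∧ n g % 2 = 0 ∧ n x % 2 = 0 := by
  by_contra! hc
  have := h.weight_eq_zero_of_gen (fun i => if n i % 2 = 0 then 1 else 0) (fun g x q hg hr => by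
    have h1 := hc g x q hg hr
    have h2 := h.parity hr
    grind) i
  simp [hi] at this

theorem odd_of_odd_gens (h : Sl2Table n R) (hodd : ∀ g, h.depth g = 1 → n g % 2 = 1) (i : ι) :
    n i % 2 = 1 := by
  induction i using h.depth_induction with
  | gen g hg => exact hodd g hg
  | lie g x q hg _ hr ih => have := h.parity hr; have := hodd g hg; omega

theorem odd_dim_add_depth (h : Sl2Table n R) (heven : ∀ g, h.depth g = 1 → n g % 2 = 0) (i : ι) :
    (n i + h.depth i) % 2 = 1 := by
  induction i using h.depth_induction with
  | gen g hg => have := heven g hg; omega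
  | lie g x q hg hx hr ih => have := h.parity hr; have := heven g hg; omega

theorem exists_depth_jump_of_even_gens (h : Sl2Table n R)
    (heven : ∀ g, h.depth g = 1 → n g % 2 = 0) :
    ∃ g x q, h.depth g = 1 ∧ R g x q ∧ h.depth x + 3 ≤ h.depth q := by
  obtain ⟨g, x, q, hg, hr, hd⟩ := h.exists_depth_jump
  have := h.odd_dim_add_depth heven x
  have := h.odd_dim_add_depth heven q
  have := heven g hg
  have := h.parity hr
  exact ⟨g, x, q, hg, hr, by omega⟩

variable [Fintype ι]

theorem exists_dims_of_odd_gens (h : Sl2Table n R) (hsum : ∑ i, n i ≤ 11)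
    (hodd : ∀ g, h.depth g = 1 → n g % 2 = 1) :
    ∃ A B Z, (∀ i, h.depth i ≤ h.depth Z) ∧ 3 ≤ h.depth Z ∧
      (∀ g, h.depth g = 1 → (g = A ∨ g = B) ∧ n g = 3) ∧
      ∀ i, h.depth i ≠ 1 → i ≠ Z → n i = 1 := by
  have odd := h.odd_of_odd_gens hodd
  obtain ⟨Z, hZ, hZ3⟩ := h.exists_top
  obtain ⟨A, B, hAB, hA, hB⟩ := h.exists_two_gens
  obtain ⟨T, hT⟩ := h.exists_depth_eq (m := 2) (by omega) (q := Z) (by omega)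
  have three_le : ∀ i, n i ≠ 1 → 3 ≤ n i := fun i _ => by have := odd i; have := h.pos i; omega
  have gen_three_le : ∀ g, h.depth g = 1 → 3 ≤ n g := fun g hg =>
    three_le g (by have := h.two_le_of_depth_eq_one hg; omega)
  have nA := gen_three_le A hA
  have nB := gen_three_le B hB
  have nZ := three_le Z (by have := BracketTable.two_le_top hZ rfl; omega)
  have trivial_of_ne : ∀ i, i ≠ A → i ≠ B → i ≠ Z → n i = 1 := by
    intro i hiA hiB hiZ
    by_contra hi
    have := three_le i hi
    have := sum_map_le_sum_univ n (l := [A, B, Z, i]) (by grind)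
    simp only [List.map_cons, List.map_nil, List.sum_cons, List.sum_nil] at this
    omega
  have gen : ∀ g, h.depth g = 1 → g = A ∨ g = B := by
    intro g hg
    by_contra! hne
    have := gen_three_le g hg
    have := trivial_of_ne g hne.1 hne.2 (by grind)
    omega
  have nT := h.pos T
  have := sum_map_le_sum_univ n (l := [A, B, Z, T]) (by grind)
  simp only [List.map_cons, List.map_nil, List.sum_cons, List.sum_nil] at this
  have := odd A
  have := odd B
  refine ⟨A, B, Z, hZ, hZ3, fun g hg => ⟨gen g hg, ?_⟩,
    fun i hi => trivial_of_ne i (by grind) (by grind)⟩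
  rcases gen g hg with rfl | rfl <;> omega

theorem not_all_gens_odd (h : Sl2Table n R) (hsum : ∑ i, n i ≤ 11)
    (hodd : ∀ g, h.depth g = 1 → n g % 2 = 1) : False := by
  obtain ⟨A, B, Z, hZ, hZ3, gen, trivial_of_ne⟩ := h.exists_dims_of_odd_gens hsum hodd
  obtain ⟨T, hT⟩ := h.exists_depth_eq (m := 2) (by omega) (q := Z) (by omega)
  have nT : n T = 1 := trivial_of_ne T (by omega) (by grind)
  have self : ∀ g, h.depth g = 1 → ∀ p, R g g p → p = Z := by
    intro g hg p hp
    have := h.dim_self_of_three (gen g hg).2 hp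
    have := h.depth_lt hp
    by_contra hpZ
    have := trivial_of_ne p (by omega) hpZ
    omega
  obtain ⟨U, W, hU, hW, hUW⟩ := h.exists_gen_of_two_le_depth hT.ge
  obtain ⟨X, Q, hX, hXQ⟩ := h.exists_gen_acts nT
  have not_acts : ∀ u w, h.depth u = 1 → R u w T → ¬ R u T Q := by
    intro u w hu hw hr
    obtain ⟨p, hp, hpw⟩ := h.self_rel_of_trivial nT (h.two_le_of_depth_eq_one hu) hw hr
    obtain rfl := self u hu p hp
    exact BracketTable.not_rel_top_left hZ _ _ hpw
  have hne : U ≠ W := by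
    rintro rfl
    have := self U hU _ hUW
    grind
  have hW : h.depth W = 1 := by omega
  rcases (show X = U ∨ X = W by grind) with rfl | rfl
  · exact not_acts _ _ hX hUW hXQ
  · exact not_acts _ _ hX (h.symm hUW) hXQ

end Sl2Table

namespace BracketTable

variable {ι : Type*} {n : ι → ℕ} {R : ι → ι → ι → Prop} {h : BracketTable n R} {A B C T Z : ι}

theorem not_rel_bracket_self (hZ : ∀ i, h.depth i ≤ h.depth Z) (hAB : R A B Z) (hT : R A A T)
    (q : ι) : ¬ R B T q := by
  intro hq
  rcases h.jacobi hT hq with ⟨p, hp, hpq⟩ | ⟨p, hp, hpq⟩ <;>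
  · obtain rfl := h.unique hp (h.symm hAB)
    exact not_rel_top_left hZ _ _ hpq

theorem not_rel_bracket_bracket_self (hZ : ∀ i, h.depth i ≤ h.depth Z) (hAB : R A B Z)
    (hT : R A A T) (hC : R A T C) (q : ι) : ¬ R B C q := by
  intro hq
  rcases h.jacobi hC hq with ⟨p, hp, hpq⟩ | ⟨p, hp, -⟩
  · obtain rfl := h.unique hp (h.symm hAB)
    exact not_rel_top_left hZ _ _ hpq
  · exact not_rel_bracket_self hZ hAB hT p hp

end BracketTable

namespace Sl2Table

variable {ι : Type*} {n : ι → ℕ} {R : ι → ι → ι → Prop} {A B C T Z : ι}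

open BracketTable

section DepthFour

variable (h : Sl2Table n R) (hZ : h.depth Z = 4) (nA : n A = 2) (nB : n B = 2) (nZ : n Z = 3)
  (gen : ∀ i, h.depth i = 1 → i = A ∨ i = B) (eqC : ∀ i, h.depth i = 3 → i = C)
  (le : ∀ i, h.depth i ≤ h.depth Z) (eqZ : ∀ i, h.depth i = 4 → i = Z) (hABZ : R A B Z)
include hZ nA nB nZ gen eqC le eqZ hABZ

theorem rel_of_self_of_depth_four (hT : R A A T) : R A T C ∧ R A C Z ∧ ∀ t, ¬ R B B t := by
  have act : ∀ t g q, n t = 1 → h.depth g = 1 → R g t q → q = C := by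
    intro t g q ht hg hq
    have := h.dim_eq_of_trivial ht (h.symm hq)
    have := h.two_le_depth_of_eq_one ht
    have := h.depth_add_le hq
    have := le q
    grind
  have nT := h.dim_self_of_two nA hT
  have hATC : R A T C := by
    obtain ⟨g, q, hg, hq⟩ := h.exists_gen_acts nT
    obtain rfl := act T g q nT hg hq
    rcases gen g hg with rfl | rfl
    · exact hq
    · exact absurd hq (not_rel_bracket_self le hABZ hT _)
  have hACZ : R A C Z := by
    have := not_rel_bracket_bracket_self le hABZ hT hATC Z
    obtain ⟨g, x, hg, hx, hr⟩ := h.exists_gen_of_two_le_depth (q := Z) (by omega)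
    grind
  refine ⟨hATC, hACZ, fun t ht => ?_⟩
  have nt := h.dim_self_of_two nB ht
  obtain ⟨g, q, hg, hq⟩ := h.exists_gen_acts nt
  obtain rfl := act t g q nt hg hq
  rcases gen g hg with rfl | rfl
  · exact not_rel_bracket_self le (h.symm hABZ) ht _ hq
  · exact not_rel_bracket_bracket_self le (h.symm hABZ) ht hq _ hACZ

theorem not_rel_self_of_depth_four (hA : h.depth A = 1) (hB : h.depth B = 1) (T : ι) :
    ¬ R A A T := by
  intro hT
  obtain ⟨hATC, hACZ, hBB⟩ := rel_of_self_of_depth_four h hZ nA nB nZ gen eqC le eqZ hABZ hT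
  have := h.depth_add_le hT
  have := h.depth_add_le hATC
  have := h.depth_add_le hACZ
  have hBT := not_rel_bracket_self le hABZ hT
  have hBC := not_rel_bracket_bracket_self le hABZ hT hATC
  have hunique := @h.unique
  have hsymm := @h.symm
  have eqT : ∀ t, h.depth t = 2 → t = T := by
    intro t ht
    obtain ⟨g, x, hg, hx, hr⟩ := h.exists_gen_of_two_le_depth ht.ge
    rcases gen g hg with rfl | rfl <;> rcases gen x (by omega) with rfl | rfl <;> grind
  have all : ∀ x, x = A ∨ x = B ∨ x = T ∨ x = C ∨ x = Z := by
    intro x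
    have := h.depth_pos x
    have := le x
    grind
  classical
  have := h.weight_eq_zero_of_gen
    (fun i => if i = A then 1 else if i = T then 2 else if i = Z then 4 else 3)
    (fun g x q hg hr => by
      have := not_rel_top_right le g q
      rcases gen g hg with rfl | rfl <;> rcases all x with rfl | rfl | rfl | rfl | rfl <;>
        grind) A
  grind

end DepthFour

section EvenGens

variable [Fintype ι] (h : Sl2Table n R) (hsum : ∑ i, n i ≤ 11)
  (heven : ∀ g, h.depth g = 1 → n g % 2 = 0) (hZ : ∀ i, h.depth i ≤ h.depth Z)
include hsum heven hZ

theorem exists_dims_of_depth_four (h4 : h.depth Z = 4) :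
    ∃ A B C, (n A = 2 ∧ n B = 2 ∧ n Z = 3) ∧ (h.depth A = 1 ∧ h.depth B = 1) ∧
      (∀ i, h.depth i = 1 → i = A ∨ i = B) ∧ (∀ i, h.depth i = 3 → i = C) ∧
      ∀ i, h.depth i = 4 → i = Z := by
  have odd := h.odd_dim_add_depth heven
  have two_le := fun i => BracketTable.two_le_top hZ (i := i)
  have two_le_gen := fun i => h.two_le_of_depth_eq_one (i := i)
  have pos := h.pos
  obtain ⟨A, B, hAB, hA, hB⟩ := h.exists_two_gens
  obtain ⟨T, hT⟩ := h.exists_depth_eq (m := 2) (by omega) (q := Z) (by omega)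
  obtain ⟨C, hC⟩ := h.exists_depth_eq (m := 3) (by omega) (q := Z) (by omega)
  have hnodup : [A, B, T, C, Z].Nodup := h.nodup_cons_cons hAB hA hB (by grind)
  have hlow : 2 ≤ n A ∧ 2 ≤ n B ∧ 1 ≤ n T ∧ 2 ≤ n C ∧ 3 ≤ n Z := by grind
  have hle := sum_map_le_sum_univ n hnodup
  simp only [List.map_cons, List.map_nil, List.sum_cons, List.sum_nil] at hle
  have mem : ∀ i, 2 ≤ n i → i = A ∨ i = B ∨ i = T ∨ i = C ∨ i = Z := by
    intro i hi
    have := mem_of_sum_univ_lt n hnodup (i := i) (by grind)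
    grind
  refine ⟨A, B, C, by grind, ⟨hA, hB⟩, by grind, fun i hi => ?_, by grind⟩
  have := odd i
  grind

theorem top_ne_four_of_even_gens : h.depth Z ≠ 4 := by
  intro h4
  obtain ⟨A, B, C, ⟨nA, nB, nZ⟩, ⟨hA, hB⟩, gen, eqC, eqZ⟩ :=
    h.exists_dims_of_depth_four hsum heven hZ h4
  have hABZ : R A B Z := by
    obtain ⟨g, x, q, hg, hr, hd⟩ := h.exists_depth_jump_of_even_gens heven
    have := h.depth_pos x
    have := hZ q
    rw [eqZ q (by omega)] at hr
    have self : ∀ i, n i = 2 → ¬ R i i Z := fun i hi hr => by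
      have := h.dim_self_of_two hi hr
      omega
    have hsymm := @h.symm
    rcases gen g hg with rfl | rfl <;> rcases gen x (by omega) with rfl | rfl <;> grind
  have hAA := not_rel_self_of_depth_four h h4 nA nB nZ gen eqC hZ eqZ hABZ hA hB
  have hBB := not_rel_self_of_depth_four h h4 nB nA nZ (fun i hi => (gen i hi).symm) eqC hZ eqZ
    (h.symm hABZ) hB hA
  obtain ⟨T, hT⟩ := h.exists_depth_eq (m := 2) (by omega) (q := Z) (by omega)
  obtain ⟨g, x, hg, hx, hr⟩ := h.exists_gen_of_two_le_depth hT.ge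
  have hunique := @h.unique
  have hsymm := @h.symm
  rcases gen g hg with rfl | rfl <;> rcases gen x (by omega) with rfl | rfl <;> grind

theorem dims_of_depth_five (h5 : h.depth Z = 5) (hC : h.depth C = 3) :
    (∀ i, n i ≤ 2) ∧ ∀ q, n q = 2 → 3 ≤ h.depth q → q = C ∨ q = Z := by
  have odd := h.odd_dim_add_depth heven
  have := h.two_le_top hZ rfl
  have two_le_gen := fun i => h.two_le_of_depth_eq_one (i := i)
  have pos := h.pos
  obtain ⟨A, B, hAB, hA, hB⟩ := h.exists_two_gens
  obtain ⟨T, hT⟩ := h.exists_depth_eq (m := 2) (by omega) (q := Z) (by omega)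
  obtain ⟨X, hX⟩ := h.exists_depth_eq (m := 4) (by omega) (q := Z) (by omega)
  have hnodup : [A, B, T, C, X, Z].Nodup := h.nodup_cons_cons hAB hA hB (by grind)
  have hlow : 2 ≤ n A ∧ 2 ≤ n B ∧ 1 ≤ n T ∧ 2 ≤ n C ∧ 1 ≤ n X ∧ 2 ≤ n Z := by grind
  have hle := sum_map_le_sum_univ n hnodup
  simp only [List.map_cons, List.map_nil, List.sum_cons, List.sum_nil] at hle
  have mem : ∀ i, 2 ≤ n i → i = A ∨ i = B ∨ i = T ∨ i = C ∨ i = X ∨ i = Z := by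
    intro i hi
    have := mem_of_sum_univ_lt n hnodup (i := i) (by grind)
    grind
  refine ⟨fun i => ?_, fun q hq hd => ?_⟩
  · by_contra! hi
    have := odd i
    rcases mem i hi.le with rfl | rfl | rfl | rfl | rfl | rfl <;> omega
  · have := odd q
    rcases mem q hq.ge with rfl | rfl | rfl | rfl | rfl | rfl <;> grind

theorem top_ne_five_of_even_gens : h.depth Z ≠ 5 := by
  intro h5
  have odd := h.odd_dim_add_depth heven
  obtain ⟨Y, D, hY, hD, hYD⟩ := h.exists_gen_of_two_le_depth (q := Z) (by omega)
  obtain ⟨X, C, hX, hC, hXC⟩ := h.exists_gen_of_two_le_depth (q := D) (by omega)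
  obtain ⟨W, T, hW, hT, hWT⟩ := h.exists_gen_of_two_le_depth (q := C) (by omega)
  obtain ⟨U, V, hU, hV, hUV⟩ := h.exists_gen_of_two_le_depth (q := T) (by omega)
  obtain ⟨le_two, eq_or⟩ := h.dims_of_depth_five hsum heven hZ h5 (C := C) (by omega)
  have nC : n C = 2 := by have := odd C; have := le_two C; have := h.pos C; omega
  have two_gen : ∀ g, h.depth g = 1 → n g = 2 := fun g hg =>
    (le_two g).antisymm (h.two_le_of_depth_eq_one hg)
  refine h.weight_one_cubic le_two (G := {g | h.depth g = 1}) nC two_gen ?_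
    ⟨U, hU, V, by grind, T, hUV, W, hW, h.symm hWT⟩ X hX D (h.symm hXC) Y hY Z (h.symm hYD)
  intro g hg g' hg' t ht g'' hg'' q hq
  have := h.depth_add_le ht
  have := h.depth_add_le hq
  have nq : n q = 2 := by
    have := h.parity ht
    have := h.parity hq
    have := le_two q
    have := h.pos q
    grind
  rcases eq_or q nq (by grind) with rfl | rfl
  · exact Or.inl rfl
  · exact Or.inr (not_rel_top_left hZ)

theorem depth_le_five_of_even_gens : h.depth Z ≤ 5 := by
  by_contra! h6
  have odd := h.odd_dim_add_depth heven
  have := h.two_le_top hZ rfl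
  have two_le_gen := fun i => h.two_le_of_depth_eq_one (i := i)
  have pos := h.pos
  obtain ⟨A, B, hAB, hA, hB⟩ := h.exists_two_gens
  obtain ⟨x₂, h₂⟩ := h.exists_depth_eq (m := 2) (by omega) (q := Z) (by omega)
  obtain ⟨x₃, h₃⟩ := h.exists_depth_eq (m := 3) (by omega) (q := Z) (by omega)
  obtain ⟨x₄, h₄⟩ := h.exists_depth_eq (m := 4) (by omega) (q := Z) (by omega)
  obtain ⟨x₅, h₅⟩ := h.exists_depth_eq (m := 5) (by omega) (q := Z) (by omega)
  have := sum_map_le_sum_univ n (l := [A, B, x₂, x₃, x₄, x₅, Z]) (h.nodup_cons_cons hAB hA hB (by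
    grind))
  simp only [List.map_cons, List.map_nil, List.sum_cons, List.sum_nil] at this
  grind

end EvenGens

theorem not_all_gens_even [Fintype ι] (h : Sl2Table n R) (hsum : ∑ i, n i ≤ 11)
    (heven : ∀ g, h.depth g = 1 → n g % 2 = 0) : False := by
  obtain ⟨Z, hZ, -⟩ := h.exists_top
  obtain ⟨g, x, q, -, -, hd⟩ := h.exists_depth_jump_of_even_gens heven
  have := h.depth_pos x
  have := hZ q
  have := h.depth_le_five_of_even_gens hsum heven hZ
  have := h.top_ne_four_of_even_gens hsum heven hZ
  have := h.top_ne_five_of_even_gens hsum heven hZ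
  omega

section NoMiddle

variable [Fintype ι] (h : Sl2Table n R) (hsum : ∑ i, n i ≤ 11) (hZ : ∀ i, h.depth i ≤ h.depth Z)
  (hZ3 : 3 ≤ h.depth Z) (hmid : ∀ i, n i ≠ 1 → h.depth i = 1 ∨ h.depth i = h.depth Z)

include hZ hZ3 hmid

omit [Fintype ι] in
theorem depth_of_no_middle : h.depth Z = 3 ∧ ∀ i, n i = 1 → h.depth i = 2 := by
  have two : ∀ i, n i = 1 → h.depth i = 2 := by
    intro i hi
    by_contra hd
    have := h.two_le_depth_of_eq_one hi
    obtain ⟨g, x, hg, hx, hr⟩ := h.exists_gen_of_two_le_depth (q := i) (by omega)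
    have := hZ i
    have nx : n x = 1 := by
      by_contra hnx
      have := hmid x hnx
      omega
    have := h.dim_eq_of_trivial nx (h.symm hr)
    have := h.two_le_of_depth_eq_one hg
    omega
  refine ⟨?_, two⟩
  obtain ⟨x, hx⟩ := h.exists_depth_eq (m := h.depth Z - 1) (by omega) (q := Z) (by omega)
  by_contra hne
  have := two x (by by_contra hnx; have := hmid x hnx; omega)
  omega

omit [Fintype ι] in
theorem dims_eq_of_no_middle {u w t g q : ι} (ht : n t = 1) (huw : R u w t) (hgt : R g t q) :
    n u = n w ∧ n g = n u ∧ n q = n u := by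
  obtain ⟨hZ3, -⟩ := h.depth_of_no_middle hZ hZ3 hmid
  have of_acts : ∀ x p i, R g x p → ∀ y, R p y i → n g = n x := by
    intro x p i hp y hpy
    have := h.depth_add_le hp
    have := h.depth_pos g
    have := h.depth_pos x
    have := h.depth_lt hpy
    have := hZ i
    exact h.dim_eq_of_trivial_output (by by_contra hnp; have := hmid p hnp; omega) hp
  have hu := h.dim_eq_of_trivial_output ht huw
  have hq := h.dim_eq_of_trivial ht (h.symm hgt)
  rcases h.jacobi huw hgt with ⟨p, hp, hpq⟩ | ⟨p, hp, hpq⟩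
  all_goals
  · have := of_acts _ _ _ hp _ hpq
    omega

variable (hA : h.depth A = 1) (eA : n A % 2 = 0)
include hsum hA eA

theorem even_of_rel_trivial_of_no_middle {u w t : ι} (ht : n t = 1) (huw : R u w t) :
    n u % 2 = 0 := by
  obtain ⟨-, two⟩ := h.depth_of_no_middle hZ hZ3 hmid
  obtain ⟨g, q, hg, hgt⟩ := h.exists_gen_acts ht
  obtain ⟨h₁, h₂, h₃⟩ := h.dims_eq_of_no_middle hZ hZ3 hmid ht huw hgt
  have := h.two_le_of_depth_eq_one hA
  have := h.two_le_of_depth_eq_one hg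
  have := h.depth_add_le huw
  have := h.depth_add_le hgt
  have := h.depth_pos u
  have := h.depth_pos w
  have := two t ht
  by_contra hodd
  have hle := sum_map_le_sum_univ n (l := [A, u, t, q]) (h.nodup_cons_cons (by grind) hA (by omega)
    (by grind))
  simp only [List.map_cons, List.map_nil, List.sum_cons, List.sum_nil] at hle
  by_cases huw' : u = w
  · subst huw'
    have := h.dim_self_of_three (by omega) huw
    omega
  · have hle := sum_map_le_sum_univ n (l := [w, A, u, t, q]) (List.nodup_cons.2 ⟨by grind,
      h.nodup_cons_cons (by grind) hA (by omega) (by grind)⟩)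
    simp only [List.map_cons, List.map_nil, List.sum_cons, List.sum_nil] at hle
    omega

theorem trivial_of_even_of_no_middle (hB : h.depth B = 1) (oB : n B % 2 = 1) {g x q : ι}
    (hg : h.depth g = 1) (eg : n g % 2 = 0) (ex : n x % 2 = 0) (hr : R g x q) : n q = 1 := by
  obtain ⟨hZ3, -⟩ := h.depth_of_no_middle hZ hZ3 hmid
  by_contra hq
  obtain ⟨t, ht⟩ := h.exists_depth_eq (m := 2) (by omega) (q := Z) (by omega)
  have nt : n t = 1 := by by_contra hnt; have := hmid t hnt; omega
  obtain ⟨u, w, -, -, huw⟩ := h.exists_gen_of_two_le_depth ht.ge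
  obtain ⟨g', q', hg', hgt⟩ := h.exists_gen_acts nt
  have := h.even_of_rel_trivial_of_no_middle hsum hZ (by omega) hmid hA eA nt huw
  have := h.dims_eq_of_no_middle hZ (by omega) hmid nt huw hgt
  have := h.depth_add_le hgt
  have := h.depth_lt hr
  have := h.parity hr
  have := hmid x (by omega)
  have := hmid q hq
  have := hZ q
  have := hZ q'
  have := h.pos q
  have := h.two_le_of_depth_eq_one hg
  have := h.two_le_of_depth_eq_one hB
  have := h.two_le_of_depth_eq_one hg'
  have hnodup : [g, B, t, q'].Nodup := h.nodup_cons_cons (by grind) hg hB (by grind)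
  have hq3 : h.depth q = 3 := by omega
  have oq : n q % 2 = 1 := by omega
  have eq' : n q' % 2 = 0 := by omega
  have hnodup : [q, g, B, t, q'].Nodup :=
    List.nodup_cons.2 ⟨by grind (splits := 20), hnodup⟩
  have hle := sum_map_le_sum_univ n hnodup
  simp only [List.map_cons, List.map_nil, List.sum_cons, List.sum_nil] at hle
  have := h.pos x
  have hx := mem_of_sum_univ_lt n hnodup (i := x) (by
    simp only [List.map_cons, List.map_nil, List.sum_cons, List.sum_nil]; omega)
  obtain rfl : x = g := by grind (splits := 20)
  exact hq (h.dim_self_of_two (by omega) hr)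

theorem not_no_middle (hB : h.depth B = 1) (oB : n B % 2 = 1) : False := by
  obtain ⟨hZ3, two⟩ := h.depth_of_no_middle hZ hZ3 hmid
  classical
  have := h.weight_eq_zero_of_gen (fun i => if h.depth i = 1 then if n i % 2 = 0 then 1 else 2 else
    if n i = 1 then 2 else if n i % 2 = 0 then 3 else 4) (fun g x q hg hr => ?_) A
  · grind
  · have := h.parity hr
    have := h.depth_add_le hr
    have := hZ q
    have := hmid x
    have := hmid q
    have := h.trivial_of_even_of_no_middle hsum hZ (by omega) hmid hA eA hB oB (x := x) (q := q) hg
    have := h.even_of_rel_trivial_of_no_middle hsum hZ (by omega) hmid hA eA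
      (u := g) (w := x) (t := q)
    grind

end NoMiddle

section Middle

variable (h : Sl2Table n R) (hZ : ∀ i, h.depth i ≤ h.depth Z) (nA : n A = 2) (nB : n B = 3)
  (gen : ∀ i, h.depth i = 1 → i = A ∨ i = B) (hA : h.depth A = 1) (hB : h.depth B = 1)
  (hC : 2 ≤ h.depth C) (hCZ : h.depth C < h.depth Z)
  (all : ∀ i, n i ≠ 1 → i = A ∨ i = B ∨ i = C ∨ i = Z)
include hZ nA nB gen hA hB hC hCZ all

theorem not_middle_dims_two_three (nC : n C = 2) (nZ : n Z = 3) : False := by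
  have := @h.unique
  have hsymm := @h.symm
  have hAC : ∀ t, n t = 1 → ¬ R A C t := by
    intro t nt ht
    have := h.depth_lt ht
    obtain ⟨g, q, hg, hq⟩ := h.exists_gen_acts nt
    have := h.depth_lt hq
    have := h.dim_eq_of_trivial nt (h.symm hq)
    rcases gen g hg with rfl | rfl
    · grind
    obtain rfl : q = Z := by grind
    rcases h.jacobi ht hq with ⟨p, hp, hpq⟩ | ⟨p, hp, -⟩
    · have := h.parity hp
      have := h.depth_lt hp
      obtain rfl : p = C := by grind
      have := h.dim_self_of_two nC hpq
      omega
    · have := h.parity hp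
      have := h.depth_lt hp
      grind
  classical
  have := h.weight_eq_zero_of_gen
    (fun i => if i = A then 1 else if i = C then 3 else if i = Z then 4 else 2)
    (fun g x q hg hr => ?_) A
  · grind
  have := not_rel_top_right hZ g q
  have := h.parity hr
  have := h.depth_lt hr
  have := h.dim_self_of_two nA (q := q)
  have := h.dim_self_of_three nB (q := q)
  have := fun nx : n x = 1 => h.dim_eq_of_trivial nx (h.symm hr)
  have := all x
  have := all q
  rcases gen g hg with rfl | rfl <;> grind

omit hZ gen hB hC hCZ in
theorem eq_top_of_rel_even_gen_of_middle (nC : n C = 3) {x p : ι} (hx : x = B ∨ n x = 1)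
    (hp : R A x p) : p = Z := by
  have := h.parity hp
  have := h.depth_lt hp
  grind

theorem not_rel_even_gen_middle (nC : n C = 3) (nZ : n Z = 2) (q : ι) : ¬ R A C q := by
  intro hq
  obtain ⟨g, x, hg, hx, hr⟩ := h.exists_gen_of_two_le_depth hC
  have := h.parity hr
  have := h.dim_self_of_two nA (q := C)
  obtain ⟨rfl, hx⟩ : g = B ∧ (x = B ∨ n x = 1) := by grind
  rcases h.jacobi hr hq with ⟨p, hp, hpq⟩ | ⟨p, hp, hpq⟩
  · obtain rfl := h.eq_top_of_rel_even_gen_of_middle nA nB hA all nC (.inl rfl) hp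
    exact not_rel_top_left hZ _ _ hpq
  · obtain rfl := h.eq_top_of_rel_even_gen_of_middle nA nB hA all nC hx hp
    exact not_rel_top_left hZ _ _ hpq

theorem not_middle_dims_three_two (nC : n C = 3) (nZ : n Z = 2) : False := by
  have := @h.unique
  have := @h.symm
  have hAC := h.not_rel_even_gen_middle hZ nA nB gen hA hB hC hCZ all nC nZ
  have hBC : ∀ t, n t = 1 → ¬ R B C t := by
    intro t nt ht
    have := h.depth_lt ht
    obtain ⟨g, q, hg, hq⟩ := h.exists_gen_acts nt
    have := h.depth_lt hq
    have := h.dim_eq_of_trivial nt (h.symm hq)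
    rcases gen g hg with rfl | rfl
    · rcases h.jacobi ht hq with ⟨p, hp, hpq⟩ | ⟨p, hp, -⟩
      · obtain rfl := h.eq_top_of_rel_even_gen_of_middle nA nB hA all nC (.inl rfl) hp
        exact not_rel_top_left hZ _ _ hpq
      · exact hAC p hp
    · grind
  classical
  have := h.weight_eq_zero_of_gen
    (fun i => if i = A then 1 else if i = C then 4 else if i = Z then 3 else 2)
    (fun g x q hg hr => ?_) A
  · grind
  have := not_rel_top_right hZ g q
  have := h.parity hr
  have := h.depth_lt hr
  have := h.dim_self_of_two nA (q := q)
  have := h.dim_self_of_three nB (q := q)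
  have := fun nx : n x = 1 => h.dim_eq_of_trivial nx (h.symm hr)
  have := all x
  have := all q
  rcases gen g hg with rfl | rfl <;> grind

section TwoTwo

variable (nC : n C = 2) (nZ : n Z = 2)
include nC nZ

omit hZ nA hC hCZ in
theorem not_rel_odd_gen_of_middle {x : ι} (hx : x = B ∨ n x = 1) (q : ι) : ¬ R B x q := by
  intro hq
  have := h.depth_lt hq
  have : n q = 3 := by
    rcases hx with rfl | hx
    · exact h.dim_self_of_three nB hq
    · have := h.dim_eq_of_trivial hx (h.symm hq)
      omega
  grind

theorem not_rel_mul_middle_of_rel (hABC : R A B C) : ∀ q, ¬ R A C q ∧ ¬ R B C q := by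
  have hB_not := fun {x} => h.not_rel_odd_gen_of_middle nB gen hA hB all nC nZ (x := x)
  have hBC : ∀ q, ¬ R B C q := by
    intro q hq
    obtain ⟨y, hy⟩ := h.self_rel_of_three nB nA nC (h.symm hABC) hq
    exact hB_not (Or.inl rfl) y hy
  refine fun t => ⟨fun ht => ?_, hBC t⟩
  have := h.parity ht
  have := h.depth_lt ht
  have nt : n t = 1 := by grind
  obtain ⟨g, y, hg, hy⟩ := h.exists_gen_acts nt
  rcases gen g hg with rfl | rfl
  · obtain ⟨p, hp, hpy⟩ := h.self_rel_of_trivial nt nA.ge ht hy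
    have np := h.dim_self_of_two nA hp
    rcases h.jacobi hABC hpy with ⟨r, hr, hry⟩ | ⟨r, hr, -⟩
    · have := h.dim_eq_of_trivial np hr
      have := h.depth_lt hr
      obtain rfl | rfl : r = C ∨ r = Z := by grind
      · exact hBC _ (h.symm hry)
      · exact not_rel_top_left hZ _ _ hry
    · exact hB_not (Or.inr np) r (h.symm hr)
  · exact hB_not (Or.inr nt) y hy

theorem not_rel_mul_middle_of_not_rel (hABC : ¬ R A B C) : ∀ q, ¬ R A C q ∧ ¬ R B C q := by
  have hB_not := fun {x} => h.not_rel_odd_gen_of_middle nB gen hA hB all nC nZ (x := x)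
  have hsymm := @h.symm
  obtain ⟨t, nt, ht⟩ : ∃ t, n t = 1 ∧ R A t C := by
    obtain ⟨g, x, hg, hx, hr⟩ := h.exists_gen_of_two_le_depth hC
    have := h.parity hr
    grind
  have := h.depth_lt ht
  have hAA : R A A t := by
    obtain ⟨g, x, hg, hx, hr⟩ := h.exists_gen_of_two_le_depth (h.two_le_depth_of_eq_one nt)
    have := h.parity hr
    have := hZ x
    grind
  refine fun q => ⟨fun hq => ?_, fun hq => ?_⟩
  · have := h.parity hq
    have := h.depth_lt hq
    exact h.dim_ne_one_of_self nA nt hAA ht hq (by grind)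
  · rcases h.jacobi ht hq with ⟨p, hp, hpq⟩ | ⟨p, hp, -⟩
    · have := h.parity hp
      have := h.depth_lt hp
      obtain rfl : p = Z := by grind
      exact not_rel_top_left hZ _ _ hpq
    · exact hB_not (Or.inr nt) p hp

theorem not_middle_dims_two_two : False := by
  have hB_not := fun {x} => h.not_rel_odd_gen_of_middle nB gen hA hB all nC nZ (x := x)
  have hunique := @h.unique
  have hsymm := @h.symm
  have hmid : ∀ q, ¬ R A C q ∧ ¬ R B C q := by
    by_cases hABC : R A B C
    · exact h.not_rel_mul_middle_of_rel hZ nA nB gen hA hB hC hCZ all nC nZ hABC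
    · exact h.not_rel_mul_middle_of_not_rel hZ nA nB gen hA hB hC hCZ all nC nZ hABC
  have htop := not_rel_top_right hZ
  have trivial_eq : ∀ t, n t = 1 → R A A t := by
    intro t nt
    obtain ⟨g, x, hg, hx, hr⟩ := h.exists_gen_of_two_le_depth (h.two_le_depth_of_eq_one nt)
    have := h.parity hr
    grind
  have output : ∀ q, n q ≠ 1 → 2 ≤ h.depth q → R A B q ∨ ∃ t, n t = 1 ∧ R A t q := by
    intro q nq hq
    obtain ⟨g, x, hg, hx, hr⟩ := h.exists_gen_of_two_le_depth hq
    have := h.dim_self_of_two nA (q := q)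
    have := htop g q
    have := hmid q
    have := all x
    have := @hB_not x
    rcases gen g hg with rfl | rfl <;> grind
  classical
  have := h.weight_eq_zero_of_gen
    (fun i => if i = A then 1 else if i = B then 0 else if n i = 1 then 2 else
      if R A B i then 1 else 3) (fun g x q hg hr => ?_) A
  · grind
  have := h.parity hr
  have := h.depth_lt hr
  have := output C (by omega) hC
  have := output Z (by omega) (by omega)
  have := h.dim_self_of_two nA (q := q)
  have := fun nx : n x = 1 => h.dim_eq_of_trivial nx (h.symm hr)
  have := all x
  have := all q
  rcases gen g hg with rfl | rfl <;> grind

end TwoTwo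

end Middle

section ExistsMiddle

variable [Fintype ι] (h : Sl2Table n R) (hsum : ∑ i, n i ≤ 11) (hZ : ∀ i, h.depth i ≤ h.depth Z)
  (hA : h.depth A = 1) (eA : n A % 2 = 0) (hB : h.depth B = 1) (oB : n B % 2 = 1)
  (nC : n C ≠ 1) (hC : 2 ≤ h.depth C) (hCZ : h.depth C < h.depth Z)
include hsum hZ hA eA hB oB nC hC hCZ

theorem eq_or_of_middle {i : ι} (hi : n i ≠ 1) : i = A ∨ i = B ∨ i = C ∨ i = Z := by
  by_contra hne
  have hnodup : [i, A, B, C, Z].Nodup :=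
    List.nodup_cons.2 ⟨by grind, h.nodup_cons_cons (by grind) hA hB (by grind)⟩
  have := h.two_le_of_depth_eq_one hA
  have := h.two_le_of_depth_eq_one hB
  have := h.two_le_top hZ rfl
  have := h.pos C
  have := h.pos i
  obtain ⟨g, x, q, hg, hr, eg, ex⟩ := h.exists_even_rel eA
  have := h.parity hr
  have := h.depth_lt hr
  have hle := sum_map_le_sum_univ n hnodup
  simp only [List.map_cons, List.map_nil, List.sum_cons, List.sum_nil] at hle
  have := mem_of_sum_univ_lt n hnodup (i := q) (by
    simp only [List.map_cons, List.map_nil, List.sum_cons, List.sum_nil]; omega)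
  grind

theorem dims_of_middle : n A = 2 ∧ n B = 3 ∧
    (n C = 2 ∧ n Z = 2 ∨ n C = 2 ∧ n Z = 3 ∨ n C = 3 ∧ n Z = 2) := by
  have all := fun {i} => h.eq_or_of_middle hsum hZ hA eA hB oB nC hC hCZ (i := i)
  have hnodup : [A, B, C, Z].Nodup := h.nodup_cons_cons (by grind) hA hB (by grind)
  have := h.two_le_of_depth_eq_one hA
  have := h.two_le_of_depth_eq_one hB
  have := h.two_le_top hZ rfl
  have := h.pos C
  have hle := sum_map_le_sum_univ n hnodup
  simp only [List.map_cons, List.map_nil, List.sum_cons, List.sum_nil] at hle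
  obtain ⟨g, x, q, hg, hr, eg, ex⟩ := h.exists_even_rel eA
  have := h.parity hr
  have := h.depth_lt hr
  by_cases nq : n q = 1
  · have hle := sum_map_le_sum_univ n (l := [q, A, B, C, Z])
      (List.nodup_cons.2 ⟨by grind, hnodup⟩)
    simp only [List.map_cons, List.map_nil, List.sum_cons, List.sum_nil] at hle
    omega
  · have := fun nA : n A = 2 => h.dim_self_of_two nA (q := q)
    have := all nq
    have := @all g
    have := @all x
    grind

theorem not_middle : False := by
  have all := fun i => h.eq_or_of_middle hsum hZ hA eA hB oB nC hC hCZ (i := i)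
  obtain ⟨nA, nB, dims⟩ := h.dims_of_middle hsum hZ hA eA hB oB nC hC hCZ
  have gen : ∀ i, h.depth i = 1 → i = A ∨ i = B := fun i hi => by
    have := h.two_le_of_depth_eq_one hi
    grind
  rcases dims with ⟨nC, nZ⟩ | ⟨nC, nZ⟩ | ⟨nC, nZ⟩
  · exact h.not_middle_dims_two_two hZ nA nB gen hA hB hC hCZ all nC nZ
  · exact h.not_middle_dims_two_three hZ nA nB gen hA hB hC hCZ all nC nZ
  · exact h.not_middle_dims_three_two hZ nA nB gen hA hB hC hCZ all nC nZ

end ExistsMiddle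

theorem twelve_le_sum [Fintype ι] (h : Sl2Table n R) : 12 ≤ ∑ i, n i := by
  by_contra! hlt
  have hsum : ∑ i, n i ≤ 11 := by omega
  obtain ⟨A, hA, eA⟩ : ∃ A, h.depth A = 1 ∧ n A % 2 = 0 := by
    by_contra! hodd
    exact h.not_all_gens_odd hsum fun g hg => by have := hodd g hg; omega
  obtain ⟨B, hB, oB⟩ : ∃ B, h.depth B = 1 ∧ n B % 2 = 1 := by
    by_contra! heven
    exact h.not_all_gens_even hsum fun g hg => by have := heven g hg; omega
  obtain ⟨Z, hZ, hZ3⟩ := h.exists_top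
  by_cases hmid : ∀ i, n i ≠ 1 → h.depth i = 1 ∨ h.depth i = h.depth Z
  · exact h.not_no_middle hsum hZ hZ3 hmid hA eA hB oB
  · push Not at hmid
    obtain ⟨C, nC, hC, hCZ⟩ := hmid
    have := h.depth_pos C
    exact h.not_middle hsum hZ hA eA hB oB nC (by omega) ((hZ C).lt_of_ne hCZ)

end Sl2Table

/-! ### Perfect Lie algebras -/

section Perfect

variable {R L : Type*} [CommRing R] [LieRing L] [LieAlgebra R L]

theorem trace_toEnd_eq_zero_of_perfect (hL : ⁅(⊤ : LieIdeal R L), (⊤ : LieIdeal R L)⁆ = ⊤)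
    (M : Type*) [AddCommGroup M] [Module R M] [LieRingModule L M] [LieModule R L M] (x : L) :
    LinearMap.trace R M (LieModule.toEnd R L M x) = 0 :=
  LieModule.trace_toEnd_eq_zero_of_mem_lcs R L M le_rfl <| by
    rw [LieModule.lowerCentralSeries_succ, LieModule.lowerCentralSeries_zero, hL]
    exact LieSubmodule.mem_top x

theorem eq_top_of_forall_lie_mem_of_perfect
    (hL : ⁅(⊤ : LieIdeal R L), (⊤ : LieIdeal R L)⁆ = ⊤) {W : Submodule R L}
    (hW : ∀ x y : L, ⁅x, y⁆ ∈ W) : W = ⊤ := by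
  rw [← LieSubmodule.toSubmodule_eq_top, LieSubmodule.lieIdeal_oper_eq_linear_span'] at hL
  rw [eq_top_iff, ← hL, Submodule.span_le]
  rintro _ ⟨x, -, y, -, rfl⟩
  exact hW x y

theorem lie_top_top_of_isSimple [LieAlgebra.IsSimple R L] :
    ⁅(⊤ : LieIdeal R L), (⊤ : LieIdeal R L)⁆ = ⊤ := by
  refine (LieAlgebra.IsSimple.eq_bot_or_eq_top (R := R) _).resolve_left fun h => ?_
  refine LieAlgebra.IsSimple.non_abelian (R := R) (L := L) ⟨fun x y => ?_⟩
  simpa [h] using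
    LieSubmodule.lie_mem_lie (LieSubmodule.mem_top (R := R) x) (LieSubmodule.mem_top (R := R) y)

end Perfect

section Field

variable {K L : Type*} [Field K] [LieRing L] [LieAlgebra K L]

theorem lie_eq_zero_of_finrank_eq_one (hL : ⁅(⊤ : LieIdeal K L), (⊤ : LieIdeal K L)⁆ = ⊤)
    {M : Type*} [AddCommGroup M] [Module K M] [LieRingModule L M] [LieModule K L M]
    (hM : Module.finrank K M = 1) (x : L) (m : M) : ⁅x, m⁆ = 0 := by
  obtain ⟨c, hc⟩ : ∃ c : K, LieModule.toEnd K L M x = c • LinearMap.id := by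
    obtain ⟨v, -, hspan⟩ := finrank_eq_one_iff'.1 hM
    obtain ⟨c, hc⟩ := hspan ⁅x, v⁆
    refine ⟨c, LinearMap.ext fun w => ?_⟩
    obtain ⟨b, rfl⟩ := hspan w
    simp [← hc, smul_comm b c]
  have htr := trace_toEnd_eq_zero_of_perfect hL M x
  have := Module.finite_of_finrank_eq_succ hM
  rw [hc, map_smul, LinearMap.trace_id, hM] at htr
  simpa [show c = 0 by simpa using htr] using LinearMap.congr_fun hc m

variable [CharZero K] [IsAlgClosed K]

theorem exists_ne_bot_forall_lie_eq_zero_of_isSolvable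
    (hL : ⁅(⊤ : LieIdeal K L), (⊤ : LieIdeal K L)⁆ = ⊤) (I : LieIdeal K L)
    [LieAlgebra.IsSolvable I] (M : Type*) [AddCommGroup M] [Module K M] [LieRingModule L M]
    [LieModule K L M] [FiniteDimensional K M] [Nontrivial M] :
    ∃ W : LieSubmodule K L M, W ≠ ⊥ ∧ ∀ x ∈ I, ∀ w ∈ W, ⁅x, w⁆ = 0 := by
  obtain ⟨χ, hχ⟩ := LieModule.exists_nontrivial_weightSpace_of_isSolvable K I M
  let W : LieSubmodule K L M := LieModule.weightSpaceOfIsLieTower K M χ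
  have : Nontrivial W := hχ
  have lie_eq (x : I) (w : M) (hw : w ∈ W) : ⁅(x : L), w⁆ = χ x • w :=
    (LieModule.mem_weightSpace (L := I) χ w).1 hw x
  refine ⟨W, (LieSubmodule.nontrivial_iff_ne_bot K L M).1 this, fun x hx w hw => ?_⟩
  have htoEnd : LieModule.toEnd K L W x = χ ⟨x, hx⟩ • LinearMap.id :=
    LinearMap.ext fun w => Subtype.ext (lie_eq ⟨x, hx⟩ w w.2)
  have htr := trace_toEnd_eq_zero_of_perfect hL W x
  rw [htoEnd, map_smul, LinearMap.trace_id, smul_eq_mul, mul_eq_zero_iff_right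
    (Nat.cast_ne_zero.2 Module.finrank_pos.ne')] at htr
  rw [lie_eq ⟨x, hx⟩ w hw, htr, zero_smul]

theorem isNilpotent_toEnd_of_isSolvable
    (hL : ⁅(⊤ : LieIdeal K L), (⊤ : LieIdeal K L)⁆ = ⊤) (I : LieIdeal K L)
    [LieAlgebra.IsSolvable I] (M : Type*) [AddCommGroup M] [Module K M] [LieRingModule L M]
    [LieModule K L M] [FiniteDimensional K M] {x : L} (hx : x ∈ I) :
    IsNilpotent (LieModule.toEnd K L M x) := by
  induction hn : Module.finrank K M using Nat.strong_induction_on generalizing M with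
  | h n ih =>
    rcases subsingleton_or_nontrivial M with _ | _
    · exact ⟨0, Subsingleton.elim _ _⟩
    obtain ⟨W, hW, hlie⟩ := exists_ne_bot_forall_lie_eq_zero_of_isSolvable hL I M
    have hlt : Module.finrank K (M ⧸ W) < n := by
      have := W.toSubmodule.finrank_quotient_add_finrank
      have : 0 < Module.finrank K W.toSubmodule := Submodule.one_le_finrank_iff.2 (by simpa)
      change Module.finrank K (M ⧸ W.toSubmodule) < n
      omega
    obtain ⟨m, hm⟩ := ih _ hlt (M ⧸ W) rfl
    refine ⟨m + 1, LinearMap.ext fun v => ?_⟩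
    rw [pow_succ', Module.End.mul_apply, LinearMap.zero_apply]
    refine hlie x hx _ ?_
    rw [← LieSubmodule.Quotient.mk_eq_zero]
    have := LinearMap.congr_fun hm (LieSubmodule.Quotient.mk' W v)
    rwa [LieModule.toEnd_pow_apply_map, LinearMap.zero_apply] at this

theorem isNilpotent_of_isSolvable [FiniteDimensional K L]
    (hL : ⁅(⊤ : LieIdeal K L), (⊤ : LieIdeal K L)⁆ = ⊤)
    (I : LieIdeal K L) [LieAlgebra.IsSolvable I] : LieModule.IsNilpotent I L :=
  LieModule.isNilpotent_iff_forall'.2 fun x => isNilpotent_toEnd_of_isSolvable hL I L x.2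

end Field

/-! ### The bracket table of a decomposition -/

section Decomp

theorem finrank_iSup_eq_sum {K E ι : Type*} [Field K] [AddCommGroup E] [Module K E]
    [FiniteDimensional K E] [Fintype ι] {p : ι → Submodule K E} (hp : iSupIndep p) :
    Module.finrank K ↥(⨆ i, p i) = ∑ i, Module.finrank K (p i) := by
  classical
  rw [Submodule.iSup_eq_range_dfinsupp_lsum,
    LinearMap.finrank_range_of_inj hp.dfinsupp_lsum_injective]
  exact Module.finrank_directSum K fun i => p i

variable {g : Type*} [LieRing g] [LieAlgebra ℂ g]

theorem lie_mem_lieSpan2 {A B : Submodule ℂ g} {x y : g} (hx : x ∈ A) (hy : y ∈ B) :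
    ⁅x, y⁆ ∈ lieSpan2 g A B :=
  Submodule.subset_span ⟨x, hx, y, hy, rfl⟩

theorem lieSpan2_le {A B C : Submodule ℂ g} :
    lieSpan2 g A B ≤ C ↔ ∀ x ∈ A, ∀ y ∈ B, ⁅x, y⁆ ∈ C := by
  refine ⟨fun h x hx y hy => h (lie_mem_lieSpan2 hx hy), fun h => Submodule.span_le.2 ?_⟩
  rintro _ ⟨x, hx, y, hy, rfl⟩
  exact h x hx y hy

theorem lieSpan2_comm (A B : Submodule ℂ g) : lieSpan2 g A B = lieSpan2 g B A := by
  have swap (A B : Submodule ℂ g) : lieSpan2 g A B ≤ lieSpan2 g B A :=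
    lieSpan2_le.2 fun x hx y hy => lie_skew x y ▸ neg_mem (lie_mem_lieSpan2 hy hx)
  exact (swap A B).antisymm (swap B A)

/-- The bracket relation `[V i, V j] = V q` between members of a family of subspaces. -/
def Rel {k : ℕ} (V : Fin k → Submodule ℂ g) (i j q : Fin k) : Prop :=
  lieSpan2 g (V i) (V j) = V q

variable {s : LieSubalgebra ℂ g} {k : ℕ} {V : Fin k → Submodule ℂ g}

namespace Rel

theorem symm {i j q : Fin k} (h : Rel V i j q) : Rel V j i q :=
  (lieSpan2_comm _ _).trans h

theorem lie_mem {i j q : Fin k} (h : Rel V i j q) {x y : g} (hx : x ∈ V i) (hy : y ∈ V j) :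
    ⁅x, y⁆ ∈ V q :=
  h.le (lie_mem_lieSpan2 hx hy)

theorem le_of_forall_lie_mem {i j q : Fin k} (h : Rel V i j q) {C : Submodule ℂ g}
    (hC : ∀ x ∈ V i, ∀ y ∈ V j, ⁅x, y⁆ ∈ C) : V q ≤ C :=
  h.ge.trans (lieSpan2_le.2 hC)

end Rel

theorem Convention.exists_rel (hc : Convention g V) {i j : Fin k} {x y : g} (hx : x ∈ V i)
    (hy : y ∈ V j) (h : ⁅x, y⁆ ≠ 0) : ∃ q, Rel V i j q :=
  (hc i j ((Submodule.ne_bot_iff _).2 ⟨_, lie_mem_lieSpan2 hx hy, h⟩)).exists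

namespace IsDecomp

theorem ne_bot (hV : IsDecomp g s V) (i : Fin k) : V i ≠ ⊥ :=
  (hV.1 i).1

theorem lie_mem (hV : IsDecomp g s V) {i : Fin k} {x v : g} (hx : x ∈ s) (hv : v ∈ V i) :
    ⁅x, v⁆ ∈ V i :=
  (hV.1 i).2.1 x hx v hv

theorem exists_ne_zero (hV : IsDecomp g s V) (i : Fin k) : ∃ v ∈ V i, v ≠ 0 :=
  (Submodule.ne_bot_iff _).1 (hV.ne_bot i)

theorem one_le_finrank [FiniteDimensional ℂ g] (hV : IsDecomp g s V) (i : Fin k) :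
    1 ≤ Module.finrank ℂ (V i) :=
  Submodule.one_le_finrank_iff.2 (hV.ne_bot i)

theorem eq_of_mem (hV : IsDecomp g s V) {i j : Fin k} {x : g} (hi : x ∈ V i) (hj : x ∈ V j)
    (h0 : x ≠ 0) : i = j := by
  by_contra hij
  exact h0 (Submodule.disjoint_def.1 (hV.2.1.pairwiseDisjoint hij) x hi hj)

theorem rel_unique (hV : IsDecomp g s V) {i j q q' : Fin k} (h : Rel V i j q)
    (h' : Rel V i j q') : q = q' :=
  hV.2.1.injective hV.ne_bot (Eq.trans (Eq.symm h) h')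

theorem rel_of_lie_mem (hV : IsDecomp g s V) (hc : Convention g V) {i j q : Fin k} {x y : g}
    (hx : x ∈ V i) (hy : y ∈ V j) (h : ⁅x, y⁆ ≠ 0) (hq : ⁅x, y⁆ ∈ V q) : Rel V i j q := by
  obtain ⟨q', hr⟩ := hc.exists_rel hx hy h
  rwa [hV.eq_of_mem hq (hr.lie_mem hx hy) h]

theorem mem_radical (hV : IsDecomp g s V) {i : Fin k} {x : g} (hx : x ∈ V i) :
    x ∈ LieAlgebra.radical ℂ g :=
  hV.2.2.le (Submodule.mem_iSup_of_mem i hx)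

/-- The `i`-th summand of the radical as a Lie module over the Levi subalgebra. -/
def lieSubmodule (hV : IsDecomp g s V) (i : Fin k) : LieSubmodule ℂ s g where
  __ := V i
  lie_mem {x _} hv := hV.lie_mem x.2 hv

theorem finrank_levi_add_sum [FiniteDimensional ℂ g] (hV : IsDecomp g s V)
    (hs : IsSimpleLevi g s) :
    Module.finrank ℂ s + ∑ i, Module.finrank ℂ (V i) = Module.finrank ℂ g := by
  rw [← finrank_iSup_eq_sum hV.2.1, hV.2.2]
  exact Submodule.finrank_add_eq_of_isCompl hs.2

theorem levi_sup_iSup (hV : IsDecomp g s V) (hs : IsSimpleLevi g s) :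
    s.toSubmodule ⊔ ⨆ i, V i = ⊤ := by
  rw [hV.2.2, hs.2.sup_eq_top]

theorem induction (hV : IsDecomp g s V) (hs : IsSimpleLevi g s) {p : g → Prop}
    (levi : ∀ x ∈ s, p x) (mem : ∀ i, ∀ x ∈ V i, p x) (add : ∀ x y, p x → p y → p (x + y))
    (x : g) : p x := by
  obtain ⟨a, ha, b, hb, rfl⟩ :=
    Submodule.mem_sup.1 ((hV.levi_sup_iSup hs).symm ▸ Submodule.mem_top : x ∈ _)
  exact add _ _ (levi a ha)
    (Submodule.iSup_induction V (motive := p) hb mem (levi 0 (zero_mem _)) add)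

theorem induction₂ (hV : IsDecomp g s V) (hs : IsSimpleLevi g s) {p : g → g → Prop}
    (levi : ∀ x ∈ s, ∀ y ∈ s, p x y) (levi_mem : ∀ x ∈ s, ∀ i, ∀ y ∈ V i, p x y)
    (mem : ∀ i, ∀ x ∈ V i, ∀ j, ∀ y ∈ V j, p x y) (symm : ∀ x y, p x y → p y x)
    (add : ∀ x y z, p x y → p x z → p x (y + z)) (x y : g) : p x y := by
  have of_levi : ∀ x ∈ s, ∀ y, p x y := fun x hx =>
    hV.induction hs (levi x hx) (levi_mem x hx) (add x)
  refine hV.induction hs of_levi (fun i x hx => ?_)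
    (fun x z hx hz y => symm _ _ (add _ _ _ (symm _ _ (hx y)) (symm _ _ (hz y)))) x y
  exact hV.induction hs (fun y hy => symm _ _ (of_levi y hy x)) (mem i x hx) (add x)

theorem isCompl (hV : IsDecomp g s V) (hs : IsSimpleLevi g s) (i : Fin k) :
    IsCompl (V i) ((⨆ (j) (_ : j ≠ i), V j) ⊔ s.toSubmodule) := by
  have split : V i ⊔ ⨆ (j) (_ : j ≠ i), V j = ⨆ j, V j := (iSup_split_single V i).symm
  constructor
  · refine Disjoint.disjoint_sup_right_of_disjoint_sup_left (hV.2.1 i) ?_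
    rw [split, hV.2.2]
    exact hs.2.disjoint.symm
  · rw [codisjoint_iff, ← sup_assoc, split, sup_comm, hV.levi_sup_iSup hs]

/-- The projection of the Lie algebra onto the `i`-th summand of its radical. -/
noncomputable def proj (hV : IsDecomp g s V) (hs : IsSimpleLevi g s) (i : Fin k) : g →ₗ[ℂ] g :=
  (V i).projection _ (hV.isCompl hs i)

section Projection

variable (hV : IsDecomp g s V) (hs : IsSimpleLevi g s)

theorem proj_of_mem {i : Fin k} {x : g} (hx : x ∈ V i) : hV.proj hs i x = x :=
  Submodule.projection_apply_of_mem_left (hV.isCompl hs i) hx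

theorem proj_of_mem_ne {i j : Fin k} (hij : j ≠ i) {x : g} (hx : x ∈ V j) :
    hV.proj hs i x = 0 :=
  (Submodule.projection_apply_eq_zero_iff (hV.isCompl hs i)).2
    (Submodule.mem_sup_left (Submodule.mem_iSup_of_mem j (Submodule.mem_iSup_of_mem hij hx)))

theorem proj_of_mem_levi (i : Fin k) {x : g} (hx : x ∈ s) : hV.proj hs i x = 0 :=
  (Submodule.projection_apply_eq_zero_iff (hV.isCompl hs i)).2 (Submodule.mem_sup_right hx)

theorem proj_lie_eq_zero (hc : Convention g V) {i j q : Fin k} (h : ¬ Rel V i j q) {x y : g}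
    (hx : x ∈ V i) (hy : y ∈ V j) : hV.proj hs q ⁅x, y⁆ = 0 := by
  by_cases h0 : ⁅x, y⁆ = 0
  · rw [h0, map_zero]
  obtain ⟨q', hr⟩ := hc.exists_rel hx hy h0
  exact hV.proj_of_mem_ne hs (by rintro rfl; exact h hr) (hr.lie_mem hx hy)

theorem proj_lie_lie_eq_zero (hc : Convention g V) {i j l r : Fin k}
    (h : ∀ p, Rel V i j p → ¬ Rel V p l r) {x y z : g} (hx : x ∈ V i) (hy : y ∈ V j)
    (hz : z ∈ V l) : hV.proj hs r ⁅⁅x, y⁆, z⁆ = 0 := by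
  by_cases h0 : ⁅x, y⁆ = 0
  · rw [h0, zero_lie, map_zero]
  obtain ⟨p, hp⟩ := hc.exists_rel hx hy h0
  exact hV.proj_lie_eq_zero hs hc (h p hp) (hp.lie_mem hx hy) hz

end Projection

theorem rel_jacobi (hV : IsDecomp g s V) (hs : IsSimpleLevi g s) (hc : Convention g V)
    {i j l m r : Fin k} (h : Rel V j l m) (h' : Rel V i m r) :
    (∃ p, Rel V i j p ∧ Rel V p l r) ∨ (∃ p, Rel V i l p ∧ Rel V p j r) := by
  by_contra! hcon
  obtain ⟨hij, hil⟩ := hcon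
  have lie_lie_eq_zero : ∀ x ∈ V i, ∀ y ∈ V j, ∀ z ∈ V l, ⁅x, ⁅y, z⁆⁆ = 0 := by
    intro x hx y hy z hz
    rw [← hV.proj_of_mem hs (h'.lie_mem hx (h.lie_mem hy hz)), leibniz_lie, map_add,
      hV.proj_lie_lie_eq_zero hs hc hij hx hy hz, ← lie_skew y, map_neg,
      hV.proj_lie_lie_eq_zero hs hc hil hx hz hy, neg_zero, add_zero]
  refine hV.ne_bot r (eq_bot_iff.2 (h'.le_of_forall_lie_mem fun x hx w hw => ?_))
  have : V m ≤ LinearMap.ker (LieAlgebra.ad ℂ g x : g →ₗ[ℂ] g) :=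
    h.le_of_forall_lie_mem fun y hy z hz => lie_lie_eq_zero x hx y hy z hz
  exact this hw

theorem le_lowerCentralSeries (hV : IsDecomp g s V) {m : ℕ} {q : Fin k}
    (h : IsNested (Rel V) m q) :
    V q ≤ (LieModule.lowerCentralSeries ℂ (LieAlgebra.radical ℂ g) g m).toSubmodule := by
  induction m generalizing q with
  | zero => exact le_top
  | succ m ih =>
    obtain ⟨i, j, hj, hr⟩ := h
    refine hr.le_of_forall_lie_mem fun x hx y hy => ?_
    rw [LieModule.lowerCentralSeries_succ]
    exact LieSubmodule.lie_mem_lie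
      (LieSubmodule.mem_top (⟨x, hV.mem_radical hx⟩ : LieAlgebra.radical ℂ g)) (ih hj hy)

theorem lie_eq_zero_of_finrank_eq_one (hV : IsDecomp g s V) (hs : IsSimpleLevi g s) {i : Fin k}
    (hi : Module.finrank ℂ (V i) = 1) {x v : g} (hx : x ∈ s) (hv : v ∈ V i) : ⁅x, v⁆ = 0 := by
  have := hs.1
  replace hi : Module.finrank ℂ (hV.lieSubmodule i) = 1 := hi
  have hzero : ⁅(⟨x, hx⟩ : s), (⟨v, hv⟩ : hV.lieSubmodule i)⁆ = 0 :=
    Symp.lie_eq_zero_of_finrank_eq_one (lie_top_top_of_isSimple (R := ℂ)) hi _ _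
  exact congrArg Subtype.val hzero

theorem two_le_finrank_of_not_rel [FiniteDimensional ℂ g] (hg : IsPerfectLie g)
    (hV : IsDecomp g s V) (hs : IsSimpleLevi g s) (hc : Convention g V) {i : Fin k}
    (hi : ∀ a b, ¬ Rel V a b i) : 2 ≤ Module.finrank ℂ (V i) := by
  by_contra hlt
  have h1 : Module.finrank ℂ (V i) = 1 := by have := hV.one_le_finrank i; omega
  have proj_lie : ∀ x y : g, hV.proj hs i ⁅x, y⁆ = 0 := by
    refine hV.induction₂ hs (fun x hx y hy => hV.proj_of_mem_levi hs i (s.lie_mem hx hy))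
      (fun x hx j y hy => ?_) (fun a x hx b y hy => hV.proj_lie_eq_zero hs hc (hi a b) hx hy)
      (fun x y h => by rw [← lie_skew, map_neg, h, neg_zero])
      (fun x y z hy hz => by rw [lie_add, map_add, hy, hz, add_zero])
    rcases eq_or_ne j i with rfl | hj
    · rw [hV.lie_eq_zero_of_finrank_eq_one hs h1 hx hy, map_zero]
    · exact hV.proj_of_mem_ne hs hj (hV.lie_mem hx hy)
  have hker : LinearMap.ker (hV.proj hs i) = ⊤ := eq_top_of_forall_lie_mem_of_perfect hg proj_lie
  obtain ⟨v, hv, hv0⟩ := hV.exists_ne_zero i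
  rw [← hV.proj_of_mem hs hv, LinearMap.ker_eq_top.1 hker] at hv0
  exact hv0 rfl

theorem exists_rel_of_finrank_eq_one (hg : LieAlgebra.center ℂ g = ⊥) (hV : IsDecomp g s V)
    (hs : IsSimpleLevi g s) (hc : Convention g V) {i : Fin k}
    (hi : Module.finrank ℂ (V i) = 1) : ∃ j q, Rel V i j q := by
  by_contra! hcon
  obtain ⟨v, hv, hv0⟩ := hV.exists_ne_zero i
  have hcenter : v ∈ LieAlgebra.center ℂ g := by
    refine (LieModule.mem_maxTrivSubmodule _ _ _ v).2 (hV.induction hs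
      (fun x hx => hV.lie_eq_zero_of_finrank_eq_one hs hi hx hv) (fun j x hx => ?_)
      fun x y hx hy => by rw [add_lie, hx, hy, add_zero])
    by_contra h0
    obtain ⟨q, hq⟩ := hc.exists_rel hx hv h0
    exact hcon j q hq.symm
  rw [hg] at hcenter
  exact hv0 hcenter

/-- The operator that vanishes on the Levi subalgebra and scales the `i`-th summand of the radical
by `w i`. -/
noncomputable def scaling (hV : IsDecomp g s V) (hs : IsSimpleLevi g s) (w : Fin k → ℂ) :
    g →ₗ[ℂ] g :=
  ∑ i, w i • hV.proj hs i

section Scaling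

variable (hV : IsDecomp g s V) (hs : IsSimpleLevi g s) {w : Fin k → ℂ}

theorem scaling_of_mem_levi {x : g} (hx : x ∈ s) : hV.scaling hs w x = 0 := by
  simp [scaling, LinearMap.sum_apply, hV.proj_of_mem_levi hs _ hx]

theorem scaling_of_mem {i : Fin k} {x : g} (hx : x ∈ V i) : hV.scaling hs w x = w i • x := by
  rw [scaling, LinearMap.sum_apply, Finset.sum_eq_single i, LinearMap.smul_apply,
    hV.proj_of_mem hs hx]
  · intro j _ hj
    rw [LinearMap.smul_apply, hV.proj_of_mem_ne hs hj.symm hx, smul_zero]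
  · simp

theorem scaling_lie (hc : Convention g V) (hw : ∀ i j q, Rel V i j q → w i + w j = w q) :
    ∀ x y : g, hV.scaling hs w ⁅x, y⁆ = ⁅x, hV.scaling hs w y⁆ - ⁅y, hV.scaling hs w x⁆ := by
  refine hV.induction₂ hs (fun x hx y hy => ?_) (fun x hx i y hy => ?_)
    (fun i x hx j y hy => ?_) (fun x y h => ?_) (fun x y z hy hz => ?_)
  · simp [hV.scaling_of_mem_levi hs hx, hV.scaling_of_mem_levi hs hy,
      hV.scaling_of_mem_levi hs (s.lie_mem hx hy)]
  · simp [hV.scaling_of_mem_levi hs hx, hV.scaling_of_mem hs hy,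
      hV.scaling_of_mem hs (hV.lie_mem hx hy)]
  · rw [hV.scaling_of_mem hs hx, hV.scaling_of_mem hs hy, lie_smul, lie_smul, ← lie_skew y x,
      smul_neg, sub_neg_eq_add, ← add_smul]
    by_cases h0 : ⁅x, y⁆ = 0
    · simp [h0]
    obtain ⟨q, hq⟩ := hc.exists_rel hx hy h0
    rw [hV.scaling_of_mem hs (hq.lie_mem hx hy), ← hw i j q hq, add_comm]
  · rw [← lie_skew, map_neg, h, neg_sub]
  · simp only [lie_add, map_add, add_lie, hy, hz]
    abel

theorem mem_radical_of_scaling_eq_lie {x : g} (hx : ∀ y, hV.scaling hs w y = ⁅x, y⁆) :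
    x ∈ LieAlgebra.radical ℂ g := by
  obtain ⟨a, ha, b, hb, rfl⟩ :=
    Submodule.mem_sup.1 (hs.2.sup_eq_top.symm ▸ Submodule.mem_top : x ∈ _)
  have centralizes : ∀ y ∈ s, ⁅y, a⁆ = 0 := by
    intro y hy
    have hsum : ⁅a, y⁆ + ⁅b, y⁆ = 0 := by rw [← add_lie, ← hx, hV.scaling_of_mem_levi hs hy]
    refine Submodule.disjoint_def.1 hs.2.disjoint _ (s.lie_mem hy ha) ?_
    rw [← lie_skew, eq_neg_of_add_eq_zero_left hsum, neg_neg]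
    exact lie_mem_left ℂ g (LieAlgebra.radical ℂ g) b y hb
  have := hs.1
  have hcenter : (⟨a, ha⟩ : s) ∈ LieAlgebra.center ℂ s :=
    (LieModule.mem_maxTrivSubmodule _ _ _ _).2 fun y => Subtype.ext (centralizes y y.2)
  rw [LieAlgebra.center_eq_bot, LieSubmodule.mem_bot] at hcenter
  rw [show a = 0 from congrArg Subtype.val hcenter, zero_add]
  exact hb

end Scaling

variable [FiniteDimensional ℂ g]

theorem weight_eq_zero (hg : IsSympathetic g) (hV : IsDecomp g s V) (hs : IsSimpleLevi g s)
    (hc : Convention g V) {w : Fin k → ℂ} (hw : ∀ i j q, Rel V i j q → w i + w j = w q)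
    (i : Fin k) : w i = 0 := by
  obtain ⟨x, hx⟩ := hg.2.2 { hV.scaling hs w with leibniz' := hV.scaling_lie hs hc hw }
  change ∀ y, hV.scaling hs w y = ⁅x, y⁆ at hx
  obtain ⟨v, hv, hv0⟩ := hV.exists_ne_zero i
  have heigen : (LieModule.toEnd ℂ g g x).HasEigenvalue (w i) :=
    Module.End.hasEigenvalue_of_hasEigenvector (x := v)
      ⟨Module.End.mem_eigenspace_iff.2 ((hx v).symm.trans (hV.scaling_of_mem hs hv)), hv0⟩
  exact (heigen.isNilpotent_of_isNilpotent <| isNilpotent_toEnd_of_isSolvable hg.2.1 _ g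
    (hV.mem_radical_of_scaling_eq_lie hs hx)).eq_zero

theorem bracketTable (hg : IsSympathetic g) (hrad : LieAlgebra.radical ℂ g ≠ ⊥)
    (hV : IsDecomp g s V) (hs : IsSimpleLevi g s) (hc : Convention g V) :
    BracketTable (fun i => Module.finrank ℂ (V i)) (Rel V) where
  nonempty := by
    by_contra hempty
    rw [not_nonempty_iff] at hempty
    have := hV.2.2
    rw [iSup_of_empty] at this
    exact hrad ((LieSubmodule.toSubmodule_eq_bot _).1 this.symm)
  pos := hV.one_le_finrank
  symm := Rel.symm
  unique := hV.rel_unique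
  jacobi := hV.rel_jacobi hs hc
  nilpotent := by
    have := isNilpotent_of_isSolvable hg.2.1 (LieAlgebra.radical ℂ g)
    obtain ⟨N, hN⟩ := (LieModule.isNilpotent_iff ℂ (LieAlgebra.radical ℂ g) g).1 this
    refine ⟨N, fun q hq => hV.ne_bot q (eq_bot_iff.2 ?_)⟩
    simpa [hN] using hV.le_lowerCentralSeries hq
  two_le_of_not_output _ := hV.two_le_finrank_of_not_rel hg.2.1 hs hc
  acts_of_eq_one _ := hV.exists_rel_of_finrank_eq_one hg.1 hs hc
  weight_eq_zero w hw i := by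
    have := hV.weight_eq_zero hg hs hc (w := fun i => (w i : ℂ))
      (fun i j q hr => by exact_mod_cast hw i j q hr) i
    exact_mod_cast this

end IsDecomp

end Decomp

section Rel

theorem exists_smul_eq_of_finrank_eq_one {K E : Type*} [Field K] [AddCommGroup E] [Module K E]
    {W : Submodule K E} (hW : Module.finrank K W = 1) {x y : E} (hx : x ∈ W) (h0 : x ≠ 0)
    (hy : y ∈ W) : ∃ a : K, a • x = y := by
  obtain ⟨a, ha⟩ := (finrank_eq_one_iff_of_nonzero' (⟨x, hx⟩ : W) (by simpa using h0)).1 hW ⟨y, hy⟩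
  exact ⟨a, congrArg Subtype.val ha⟩

theorem even_finrank_of_isAlt_of_nondegenerate {K E : Type*} [Field K] [CharZero K]
    [AddCommGroup E] [Module K E] [FiniteDimensional K E] {B : LinearMap.BilinForm K E}
    (halt : B.IsAlt) (hB : B.Nondegenerate) : Even (Module.finrank K E) := by
  let b := Module.finBasis K E
  set A := LinearMap.BilinForm.toMatrix b B with hA
  have hdet : A.det ≠ 0 := (LinearMap.BilinForm.nondegenerate_iff_det_ne_zero b).1 hB
  have htranspose : A.transpose = -A := by
    ext i j
    simp only [hA, Matrix.transpose_apply, Matrix.neg_apply, LinearMap.BilinForm.toMatrix_apply]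
    exact (LinearMap.IsAlt.neg halt _ _).symm
  by_contra hodd
  have := A.det_transpose
  rw [htranspose, Matrix.det_neg, Fintype.card_fin, (Nat.not_even_iff_odd.1 hodd).neg_one_pow,
    neg_one_mul] at this
  exact hdet (self_eq_neg.1 this.symm)

variable {g : Type*} [LieRing g] [LieAlgebra ℂ g] [FiniteDimensional ℂ g]

theorem finrank_lieSpan2_self_le (A : Submodule ℂ g) :
    Module.finrank ℂ (lieSpan2 g A A) ≤ (Module.finrank ℂ A).choose 2 := by
  let b := Module.finBasis ℂ A
  let f : (Σ j : Fin (Module.finrank ℂ A), Fin j) → g :=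
    fun p => ⁅(b ⟨p.2, p.2.2.trans p.1.2⟩ : g), (b p.1 : g)⁆
  have basis_lie_of_lt (i j) (hij : i < j) :
      ⁅(b i : g), (b j : g)⁆ ∈ Submodule.span ℂ (Set.range f) :=
    Submodule.subset_span ⟨⟨j, ⟨i, hij⟩⟩, rfl⟩
  have basis_lie (i j) : ⁅(b i : g), (b j : g)⁆ ∈ Submodule.span ℂ (Set.range f) := by
    rcases lt_trichotomy i j with hij | rfl | hij
    · exact basis_lie_of_lt i j hij
    · rw [lie_self]
      exact zero_mem _
    · rw [← lie_skew]
      exact neg_mem (basis_lie_of_lt j i hij)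
  have hspan : lieSpan2 g A A ≤ Submodule.span ℂ (Set.range f) := by
    refine lieSpan2_le.2 fun x hx y hy => ?_
    have expand (x : g) (hx : x ∈ A) : ∑ i, b.repr ⟨x, hx⟩ i • (b i : g) = x := by
      simpa only [Submodule.coe_sum, Submodule.coe_smul]
        using congrArg Subtype.val (b.sum_repr ⟨x, hx⟩)
    rw [← expand x hx, ← expand y hy, sum_lie]
    refine sum_mem fun i _ => ?_
    rw [lie_sum]
    refine sum_mem fun j _ => ?_
    rw [smul_lie, lie_smul]
    exact Submodule.smul_mem _ _ (Submodule.smul_mem _ _ (basis_lie i j))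
  calc Module.finrank ℂ (lieSpan2 g A A)
      ≤ Fintype.card (Σ j : Fin (Module.finrank ℂ A), Fin j) :=
        (Submodule.finrank_mono hspan).trans (finrank_range_le_card f)
    _ = (Module.finrank ℂ A).choose 2 := by
        rw [Fintype.card_sigma, Nat.choose_two_right, ← Finset.sum_range_id]
        simpa using Fin.sum_univ_eq_sum_range (fun j => j) (Module.finrank ℂ A)

variable {s : LieSubalgebra ℂ g} {k : ℕ} {V : Fin k → Submodule ℂ g} {i j q : Fin k}

/-- The bracket `V i × V j → V q` as a bilinear map. -/
def Rel.bilin (h : Rel V i j q) : V i →ₗ[ℂ] V j →ₗ[ℂ] V q :=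
  LinearMap.mk₂ ℂ (fun x y => (⟨⁅(x : g), (y : g)⁆, h.lie_mem x.2 y.2⟩ : V q))
    (fun _ _ _ => Subtype.ext (by simp)) (fun _ _ _ => Subtype.ext (by simp))
    (fun _ _ _ => Subtype.ext (by simp)) (fun _ _ _ => Subtype.ext (by simp))

theorem Rel.exists_ne_zero_lie_eq_zero (h : Rel V i j q)
    (hlt : Module.finrank ℂ (V q) < Module.finrank ℂ (V i)) {y : g} (hy : y ∈ V j) :
    ∃ x ∈ V i, x ≠ 0 ∧ ⁅x, y⁆ = 0 := by
  obtain ⟨x, hx, hx0⟩ := (Submodule.ne_bot_iff _).1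
    (LinearMap.ker_ne_bot_of_finrank_lt (f := h.bilin.flip ⟨y, hy⟩) hlt)
  exact ⟨x, x.2, by simpa using hx0, congrArg Subtype.val hx⟩

theorem Rel.finrank_le_choose_two (h : Rel V i i q) :
    Module.finrank ℂ (V q) ≤ (Module.finrank ℂ (V i)).choose 2 :=
  congrArg (fun W : Submodule ℂ g => Module.finrank ℂ W) h ▸ finrank_lieSpan2_self_le (V i)

namespace IsDecomp

variable (hV : IsDecomp g s V)
include hV

omit [FiniteDimensional ℂ g] in
theorem eq_zero_of_forall_lie_eq_zero (h : Rel V i j q) {x : g} (hx : x ∈ V i)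
    (h0 : ∀ y ∈ V j, ⁅x, y⁆ = 0) : x = 0 := by
  let W : Submodule ℂ g := V i ⊓ ⨅ y : V j, LinearMap.ker (LieAlgebra.ad ℂ g y : g →ₗ[ℂ] g)
  have mem_W {x : g} : x ∈ W ↔ x ∈ V i ∧ ∀ y ∈ V j, ⁅y, x⁆ = 0 := by simp [W]
  have invariant : Invariant g s W := by
    intro a ha w hw
    obtain ⟨hwi, hwj⟩ := mem_W.1 hw
    refine mem_W.2 ⟨hV.lie_mem ha hwi, fun y hy => ?_⟩
    rw [leibniz_lie, hwj y hy, lie_zero, add_zero, ← lie_skew y a, neg_lie,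
      hwj _ (hV.lie_mem ha hy), neg_zero]
  have hxW : x ∈ W := mem_W.2 ⟨hx, fun y hy => by rw [← lie_skew, h0 y hy, neg_zero]⟩
  rcases (hV.1 i).2.2 W inf_le_left invariant with hW | hW
  · simpa [hW] using hxW
  · refine absurd (eq_bot_iff.2 (h.le_of_forall_lie_mem fun x hx y hy => ?_)) (hV.ne_bot q)
    rw [← hW] at hx
    rw [← lie_skew, (mem_W.1 hx).2 y hy]
    simp

omit [FiniteDimensional ℂ g] in
theorem exists_lie_ne_zero (h : Rel V i j q) {x : g} (hx : x ∈ V i) (h0 : x ≠ 0) :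
    ∃ y ∈ V j, ⁅x, y⁆ ≠ 0 := by
  by_contra! hcon
  exact h0 (hV.eq_zero_of_forall_lie_eq_zero h hx hcon)

theorem finrank_le_mul (h : Rel V i j q) :
    Module.finrank ℂ (V i) ≤ Module.finrank ℂ (V j) * Module.finrank ℂ (V q) := by
  rw [← Module.finrank_linearMap ℂ ℂ]
  refine LinearMap.finrank_le_finrank_of_injective (f := h.bilin)
    ((injective_iff_map_eq_zero _).2 fun x hx => Subtype.ext ?_)
  exact hV.eq_zero_of_forall_lie_eq_zero h x.2 fun y hy =>
    congrArg Subtype.val (LinearMap.congr_fun hx ⟨y, hy⟩)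

theorem finrank_eq_of_finrank_eq_one (h : Rel V i j q) (hi : Module.finrank ℂ (V i) = 1) :
    Module.finrank ℂ (V q) = Module.finrank ℂ (V j) := by
  refine le_antisymm ?_ (by simpa [hi] using hV.finrank_le_mul h.symm)
  obtain ⟨t, ht, ht0⟩ := hV.exists_ne_zero i
  have hmap : V q ≤ (V j).map (LieAlgebra.ad ℂ g t : g →ₗ[ℂ] g) := by
    refine h.le_of_forall_lie_mem fun x hx y hy => ?_
    obtain ⟨a, rfl⟩ := exists_smul_eq_of_finrank_eq_one hi ht ht0 hx
    exact ⟨a • y, Submodule.smul_mem _ _ hy, by simp⟩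
  exact (Submodule.finrank_mono hmap).trans (Submodule.finrank_map_le _ _)

theorem finrank_eq_of_finrank_output_eq_one (h : Rel V i j q)
    (hq : Module.finrank ℂ (V q) = 1) : Module.finrank ℂ (V i) = Module.finrank ℂ (V j) := by
  have hij := hV.finrank_le_mul h
  have hji := hV.finrank_le_mul h.symm
  rw [hq, mul_one] at hij hji
  exact hij.antisymm hji

theorem even_finrank_of_rel_self (h : Rel V i i q) (hq : Module.finrank ℂ (V q) = 1) :
    Even (Module.finrank ℂ (V i)) := by
  obtain ⟨e⟩ : Nonempty (V q ≃ₗ[ℂ] ℂ) :=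
    ⟨LinearEquiv.ofFinrankEq _ _ (hq.trans (Module.finrank_self ℂ).symm)⟩
  let B : LinearMap.BilinForm ℂ (V i) := h.bilin.compr₂ e.toLinearMap
  have halt : B.IsAlt := fun x => by simp [B, Rel.bilin]
  refine even_finrank_of_isAlt_of_nondegenerate halt
    (halt.isRefl.nondegenerate_iff_separatingLeft.2 fun x hx => Subtype.ext ?_)
  refine hV.eq_zero_of_forall_lie_eq_zero h x.2 fun y hy => ?_
  have : h.bilin x ⟨y, hy⟩ = 0 := (map_eq_zero_iff e e.injective).1 (hx ⟨y, hy⟩)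
  exact congrArg Subtype.val this

theorem rel_self_of_finrank_eq_one (hc : Convention g V) {u w t y : Fin k}
    (ht : Module.finrank ℂ (V t) = 1) (hu : 2 ≤ Module.finrank ℂ (V u)) (h : Rel V u w t)
    (h' : Rel V u t y) : ∃ p, Rel V u u p ∧ Rel V p w y := by
  obtain ⟨c, hcw, hc0⟩ := hV.exists_ne_zero w
  obtain ⟨a, ha, ha0, hac⟩ := h.exists_ne_zero_lie_eq_zero (by omega) hcw
  obtain ⟨b, hb, hcb⟩ := hV.exists_lie_ne_zero h.symm hcw hc0
  have hbc : ⁅b, c⁆ ≠ 0 := by rwa [← lie_skew, neg_ne_zero]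
  have habc : ⁅a, ⁅b, c⁆⁆ ≠ 0 := by
    obtain ⟨d, hd, had⟩ := hV.exists_lie_ne_zero h' ha ha0
    obtain ⟨r, rfl⟩ := exists_smul_eq_of_finrank_eq_one ht (h.lie_mem hb hcw) hbc hd
    rw [lie_smul] at had
    exact right_ne_zero_of_smul had
  have hmem := h'.lie_mem ha (h.lie_mem hb hcw)
  rw [leibniz_lie, hac, lie_zero, add_zero] at habc hmem
  have hab : ⁅a, b⁆ ≠ 0 := fun h0 => habc (by rw [h0, zero_lie])
  obtain ⟨p, hp⟩ := hc.exists_rel ha hb hab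
  exact ⟨p, hp, hV.rel_of_lie_mem hc (hp.lie_mem ha hb) hcw habc hmem⟩

end IsDecomp

end Rel

/-! ### Highest weight vectors -/

section Sl2

variable {K L M : Type*} [Field K] [LieRing L] [LieAlgebra K L] [AddCommGroup M]
  [Module K M] [LieRingModule L M] [LieModule K L M] {h e f : L} {t : IsSl2Triple h e f}

theorem lie_mem_of_toLieSubalgebra_eq_top (ht : t.toLieSubalgebra K = ⊤) {W : Submodule K M}
    (hh : ∀ m ∈ W, ⁅h, m⁆ ∈ W) (he : ∀ m ∈ W, ⁅e, m⁆ ∈ W) (hf : ∀ m ∈ W, ⁅f, m⁆ ∈ W) (x : L)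
    {m : M} (hm : m ∈ W) : ⁅x, m⁆ ∈ W := by
  obtain ⟨a, b, c, rfl⟩ := IsSl2Triple.mem_toLieSubalgebra_iff.1
    (ht ▸ LieSubalgebra.mem_top x : x ∈ t.toLieSubalgebra K)
  rw [t.lie_e_f, add_lie, add_lie, smul_lie, smul_lie, smul_lie]
  exact add_mem (add_mem (W.smul_mem a (he m hm)) (W.smul_mem b (hf m hm))) (W.smul_mem c (hh m hm))

theorem span_range_pow_toEnd_f_eq_top [LieModule.IsIrreducible K L M]
    (ht : t.toLieSubalgebra K = ⊤) {v : M} {μ : K} (P : t.HasPrimitiveVectorWith v μ) :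
    Submodule.span K (Set.range fun n : ℕ => (LieModule.toEnd K L M f ^ n) v) = ⊤ := by
  set W := Submodule.span K (Set.range fun n : ℕ => (LieModule.toEnd K L M f ^ n) v)
  have mem_W (n : ℕ) : (LieModule.toEnd K L M f ^ n) v ∈ W := Submodule.subset_span ⟨n, rfl⟩
  have invariant_of_mem {x : L} (hx : ∀ n : ℕ, ⁅x, (LieModule.toEnd K L M f ^ n) v⁆ ∈ W) :
      ∀ m ∈ W, ⁅x, m⁆ ∈ W := by
    have : W ≤ W.comap (LieModule.toEnd K L M x) :=
      Submodule.span_le.2 (Set.range_subset_iff.2 hx)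
    exact this
  let N : LieSubmodule K L M :=
    { __ := W
      lie_mem {x _} hm := lie_mem_of_toLieSubalgebra_eq_top ht
        (invariant_of_mem fun n => by
          rw [P.lie_h_pow_toEnd_f]
          exact W.smul_mem _ (mem_W n))
        (invariant_of_mem fun n => by
          rcases n with _ | n
          · simp [P.lie_e]
          · rw [P.lie_e_pow_succ_toEnd_f]
            exact W.smul_mem _ (mem_W n))
        (invariant_of_mem fun n => by
          rw [P.lie_f_pow_toEnd_f]
          exact mem_W (n + 1)) x hm }
  have hN : N ≠ ⊥ := fun hbot =>
    P.ne_zero ((LieSubmodule.eq_bot_iff N).1 hbot v (mem_W 0))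
  exact congrArg LieSubmodule.toSubmodule ((eq_bot_or_eq_top N).resolve_left hN)

theorem exists_hasPrimitiveVectorWith_finrank_sub_one [CharZero K] [IsAlgClosed K]
    [FiniteDimensional K M] [LieModule.IsIrreducible K L M] (ht : t.toLieSubalgebra K = ⊤) :
    ∃ v : M, t.HasPrimitiveVectorWith v ((Module.finrank K M : K) - 1) ∧
      Submodule.span K (Set.range fun n : Fin (Module.finrank K M) =>
        (LieModule.toEnd K L M f ^ (n : ℕ)) v) = ⊤ := by
  have : Nontrivial M := LieModule.nontrivial_of_isIrreducible K L M
  obtain ⟨μ, v, -, P⟩ := t.exists_hasPrimitiveVectorWith (R := K) (M := M)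
  obtain ⟨N, rfl⟩ := P.exists_nat
  have linearIndependent : LinearIndependent K
      fun n : Fin (N + 1) => (LieModule.toEnd K L M f ^ (n : ℕ)) v := by
    refine Module.End.eigenvectors_linearIndependent' (LieModule.toEnd K L M h)
      (fun n : Fin (N + 1) => (N : K) - 2 * (n : ℕ)) (fun a b hab => ?_) _ fun n => ?_
    · simpa [Fin.ext_iff] using hab
    · exact ⟨Module.End.mem_eigenspace_iff.2 (P.lie_h_pow_toEnd_f n),
        P.pow_toEnd_f_ne_zero_of_eq_nat rfl (Nat.lt_succ_iff.1 n.2)⟩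
  have span_eq_top : Submodule.span K
      (Set.range fun n : Fin (N + 1) => (LieModule.toEnd K L M f ^ (n : ℕ)) v) = ⊤ := by
    rw [eq_top_iff, ← span_range_pow_toEnd_f_eq_top ht P, Submodule.span_le]
    rintro _ ⟨n, rfl⟩
    rcases lt_or_ge n (N + 1) with hn | hn
    · exact Submodule.subset_span ⟨⟨n, hn⟩, rfl⟩
    · have : (LieModule.toEnd K L M f ^ n) v = 0 := Module.End.pow_map_zero_of_le hn
        (P.pow_toEnd_f_eq_zero_of_eq_nat rfl)
      simp only [this, SetLike.mem_coe, zero_mem]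
  have finrank_eq : Module.finrank K M = N + 1 := by
    rw [← finrank_top, ← span_eq_top, finrank_span_eq_card linearIndependent, Fintype.card_fin]
  rw [finrank_eq]
  exact ⟨v, by simpa using P, span_eq_top⟩

end Sl2

theorem exists_eq_of_mem_iSup_eigenspace {K E ι : Type*} [Field K] [AddCommGroup E] [Module K E]
    {T : Module.End K E} {ν : ι → K} {μ : K} {x : E} (hx : x ∈ ⨆ i, T.eigenspace (ν i))
    (h : x ∈ T.eigenspace μ) (h0 : x ≠ 0) : ∃ i, μ = ν i := by
  by_contra! hcon
  have : ⨆ i, T.eigenspace (ν i) ≤ ⨆ (ν') (_ : ν' ≠ μ), T.eigenspace ν' :=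
    iSup_le fun i => le_iSup₂_of_le (ν i) (hcon i).symm le_rfl
  exact h0 (Submodule.disjoint_def.1 (T.eigenspaces_iSupIndep μ) x h (this hx))

section HighestWeight

variable {g : Type*} [LieRing g] [LieAlgebra ℂ g] {H E F : g}

/-- A highest weight vector `v` of a simple `sl₂`-submodule `A` of `g`: a primitive vector of
weight `dim A - 1` whose images under the powers of `ad F` span `A`. -/
structure IsHighestWeightVector (t : IsSl2Triple H E F) (A : Submodule ℂ g) (v : g) : Prop extends
    t.HasPrimitiveVectorWith v ((Module.finrank ℂ A : ℂ) - 1) where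
  mem : v ∈ A
  span_eq : Submodule.span ℂ
    (Set.range fun n : Fin (Module.finrank ℂ A) => (LieModule.toEnd ℂ g g F ^ (n : ℕ)) v) = A

namespace IsHighestWeightVector

variable {t : IsSl2Triple H E F} {A : Submodule ℂ g} {v : g}

theorem le_iSup_eigenspace (hv : IsHighestWeightVector t A v) :
    A ≤ ⨆ n : Fin (Module.finrank ℂ A), (LieModule.toEnd ℂ g g H).eigenspace
      ((Module.finrank ℂ A : ℂ) - 1 - 2 * (n : ℕ)) := by
  conv_lhs => rw [← hv.span_eq]
  rw [Submodule.span_le]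
  rintro _ ⟨n, rfl⟩
  exact Submodule.mem_iSup_of_mem n
    (Module.End.mem_eigenspace_iff.2 (hv.lie_h_pow_toEnd_f n))

theorem exists_eq_of_finrank_eq_two (hv : IsHighestWeightVector t A v)
    (hA : Module.finrank ℂ A = 2) {x : g} (hx : x ∈ A) : ∃ a b : ℂ, x = a • v + b • ⁅F, v⁆ := by
  have hspan := hv.span_eq
  rw [hA] at hspan
  obtain ⟨a, rfl⟩ := (Submodule.mem_span_range_iff_exists_fun ℂ).1 (hspan.ge hx)
  exact ⟨a 0, a 1, by simp [Fin.sum_univ_two]⟩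

theorem lie_eq_zero_of_finrank_eq_two (hv : IsHighestWeightVector t A v)
    (hA : Module.finrank ℂ A = 2) {y : g} (h : ⁅v, y⁆ = 0) (hF : ⁅⁅F, v⁆, y⁆ = 0) {x : g}
    (hx : x ∈ A) : ⁅x, y⁆ = 0 := by
  obtain ⟨a, b, rfl⟩ := hv.exists_eq_of_finrank_eq_two hA hx
  rw [add_lie, smul_lie, smul_lie, h, hF, smul_zero, smul_zero, add_zero]

theorem lie_eq_zero_of_finrank_eq_three (hv : IsHighestWeightVector t A v)
    (hA : Module.finrank ℂ A = 3) {y : g} (h : ⁅v, y⁆ = 0) (hF : ⁅⁅F, v⁆, y⁆ = 0)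
    (hFF : ⁅⁅F, ⁅F, v⁆⁆, y⁆ = 0) {x : g} (hx : x ∈ A) : ⁅x, y⁆ = 0 := by
  have hspan := hv.span_eq
  rw [hA] at hspan
  obtain ⟨a, rfl⟩ := (Submodule.mem_span_range_iff_exists_fun ℂ).1 (hspan.ge hx)
  simp [Fin.sum_univ_three, pow_two, -lie_lie, h, hF, hFF]

end IsHighestWeightVector

variable {s : LieSubalgebra ℂ g} {k : ℕ} {V : Fin k → Submodule ℂ g}

theorem IsDecomp.isIrreducible_lieSubmodule (hV : IsDecomp g s V) (i : Fin k) :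
    LieModule.IsIrreducible ℂ s (hV.lieSubmodule i) := by
  have : Nontrivial (hV.lieSubmodule i) := Submodule.nontrivial_iff_ne_bot.2 (hV.ne_bot i)
  refine LieModule.IsIrreducible.mk fun N hN => ?_
  let W := (N.map (hV.lieSubmodule i).incl).toSubmodule
  have mem_W {x : hV.lieSubmodule i} : (x : g) ∈ W ↔ x ∈ N :=
    ⟨fun ⟨_, hy, h⟩ => Subtype.ext h ▸ hy, fun hx => ⟨x, hx, rfl⟩⟩
  have W_le : W ≤ V i := by
    rintro _ ⟨x, -, rfl⟩
    exact x.2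
  rcases (hV.1 i).2.2 W W_le fun x hx w hw =>
      (N.map (hV.lieSubmodule i).incl).lie_mem (x := ⟨x, hx⟩) hw with h | h
  · refine absurd ((LieSubmodule.eq_bot_iff N).2 fun x hx => Subtype.ext ?_) hN
    simpa [h] using mem_W.2 hx
  · exact eq_top_iff.2 fun x _ => mem_W.1 (h ▸ x.2)

theorem mem_of_toLieSubalgebra_eq {t : IsSl2Triple H E F} (ht : t.toLieSubalgebra ℂ = s) :
    H ∈ s ∧ E ∈ s ∧ F ∈ s := by
  subst ht
  refine ⟨?_, ?_, ?_⟩ <;> exact Submodule.subset_span (by simp)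

theorem IsDecomp.exists_isHighestWeightVector [FiniteDimensional ℂ g] (hV : IsDecomp g s V)
    {t : IsSl2Triple H E F} (ht : t.toLieSubalgebra ℂ = s) (i : Fin k) :
    ∃ v, IsHighestWeightVector t (V i) v := by
  obtain ⟨hH, hE, hF⟩ := mem_of_toLieSubalgebra_eq ht
  have t' : IsSl2Triple (⟨H, hH⟩ : s) ⟨E, hE⟩ ⟨F, hF⟩ :=
    { h_ne_zero := fun h => t.h_ne_zero (congrArg Subtype.val h)
      lie_e_f := Subtype.ext t.lie_e_f
      lie_h_e_nsmul := Subtype.ext t.lie_h_e_nsmul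
      lie_h_f_nsmul := Subtype.ext t.lie_h_f_nsmul }
  have ht' : t'.toLieSubalgebra ℂ = ⊤ := by
    refine eq_top_iff.2 fun x _ => IsSl2Triple.mem_toLieSubalgebra_iff.2 ?_
    obtain ⟨a, b, c, h⟩ := IsSl2Triple.mem_toLieSubalgebra_iff.1 (ht.ge x.2)
    exact ⟨a, b, c, Subtype.ext h⟩
  have := hV.isIrreducible_lieSubmodule i
  obtain ⟨v, P, hspan⟩ :=
    exists_hasPrimitiveVectorWith_finrank_sub_one (M := hV.lieSubmodule i) ht'
  have coe_pow (n : ℕ) : (((LieModule.toEnd ℂ s (hV.lieSubmodule i) ⟨F, hF⟩ ^ n) v :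
      hV.lieSubmodule i) : g) = (LieModule.toEnd ℂ g g F ^ n) v := by
    induction n with
    | zero => rfl
    | succ n ih => rw [pow_succ', pow_succ', Module.End.mul_apply, Module.End.mul_apply, ← ih]; rfl
  refine ⟨v, ⟨fun h => P.ne_zero (Subtype.ext h), congrArg Subtype.val P.lie_h,
    congrArg Subtype.val P.lie_e⟩, v.2, ?_⟩
  have := congrArg (Submodule.map (hV.lieSubmodule i).toSubmodule.subtype) hspan
  rw [Submodule.map_span, Submodule.map_top, Submodule.range_subtype, ← Set.range_comp] at this
  refine Eq.trans (congrArg _ (congrArg _ (funext fun n => ?_))) this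
  exact (coe_pow n).symm

end HighestWeight

section Weight

variable {g : Type*} [LieRing g] [LieAlgebra ℂ g] {H E F : g}

omit [LieAlgebra ℂ g] in
theorem lie_eq_zero_comm {x y : g} : ⁅x, y⁆ = 0 ↔ ⁅y, x⁆ = 0 := by
  rw [← lie_skew, neg_eq_zero]

theorem lie_lie_eq_add_smul {x y : g} {μ ν : ℂ} (hx : ⁅H, x⁆ = μ • x) (hy : ⁅H, y⁆ = ν • y) :
    ⁅H, ⁅x, y⁆⁆ = (μ + ν) • ⁅x, y⁆ := by
  rw [leibniz_lie, hx, hy, smul_lie, lie_smul, add_smul]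

theorem lie_lie_f_eq_smul (t : IsSl2Triple H E F) {x : g} {μ : ℂ} (hx : ⁅H, x⁆ = μ • x) :
    ⁅H, ⁅F, x⁆⁆ = (μ - 2) • ⁅F, x⁆ := by
  rw [lie_lie_eq_add_smul (by rw [t.lie_lie_smul_f ℂ, neg_smul]) hx, neg_add_eq_sub]

theorem lie_mem_iSup_eigenspace {ι κ : Type*} {μ : ι → ℂ} {ν : κ → ℂ} {x y : g}
    (hx : x ∈ ⨆ a, (LieModule.toEnd ℂ g g H).eigenspace (μ a))
    (hy : y ∈ ⨆ b, (LieModule.toEnd ℂ g g H).eigenspace (ν b)) :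
    ⁅x, y⁆ ∈ ⨆ p : ι × κ, (LieModule.toEnd ℂ g g H).eigenspace (μ p.1 + ν p.2) := by
  refine Submodule.iSup_induction _ (motive := fun x => ⁅x, y⁆ ∈ _) hx (fun a x hx => ?_) ?_
    fun x x' h h' => ?_
  · refine Submodule.iSup_induction _ (motive := fun y => ⁅x, y⁆ ∈ _) hy (fun b y hy => ?_) ?_
      fun y y' h h' => ?_
    · exact Submodule.mem_iSup_of_mem (a, b) (Module.End.mem_eigenspace_iff.2
        (lie_lie_eq_add_smul (Module.End.mem_eigenspace_iff.1 hx)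
          (Module.End.mem_eigenspace_iff.1 hy)))
    · rw [lie_zero]
      exact zero_mem _
    · rw [lie_add]
      exact add_mem h h'
  · rw [zero_lie]
    exact zero_mem _
  · rw [add_lie]
    exact add_mem h h'

namespace IsHighestWeightVector

variable {t : IsSl2Triple H E F} {A : Submodule ℂ g} {v x : g} {μ : ℂ}

theorem exists_weight_eq (hv : IsHighestWeightVector t A v) (hx : x ∈ A) (h : ⁅H, x⁆ = μ • x)
    (h0 : x ≠ 0) :
    ∃ n : Fin (Module.finrank ℂ A), μ = (Module.finrank ℂ A : ℂ) - 1 - 2 * (n : ℕ) :=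
  exists_eq_of_mem_iSup_eigenspace (hv.le_iSup_eigenspace hx) (Module.End.mem_eigenspace_iff.2 h) h0

theorem eq_zero_of_finrank_eq_two (hv : IsHighestWeightVector t A v)
    (hA : Module.finrank ℂ A = 2) (hx : x ∈ A) (h : ⁅H, x⁆ = μ • x) (h1 : μ ≠ 1) (h2 : μ ≠ -1) :
    x = 0 := by
  by_contra h0
  have := hv.exists_weight_eq hx h h0
  rw [hA] at this
  obtain ⟨n, rfl⟩ := this
  fin_cases n
  · norm_num at h1
  · norm_num at h2

theorem lie_h_of_finrank_eq_two (hv : IsHighestWeightVector t A v)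
    (hA : Module.finrank ℂ A = 2) : ⁅H, v⁆ = (1 : ℂ) • v := by
  rw [hv.lie_h, hA]
  norm_num

theorem lie_h_of_finrank_eq_three (hv : IsHighestWeightVector t A v)
    (hA : Module.finrank ℂ A = 3) : ⁅H, v⁆ = (2 : ℂ) • v := by
  rw [hv.lie_h, hA]
  norm_num

theorem exists_smul_eq_of_finrank_eq_two (hv : IsHighestWeightVector t A v)
    (hA : Module.finrank ℂ A = 2) (hx : x ∈ A) (h : ⁅H, x⁆ = (1 : ℂ) • x) :
    ∃ a : ℂ, a • v = x := by
  obtain ⟨a, b, rfl⟩ := hv.exists_eq_of_finrank_eq_two hA hx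
  have hH := hv.lie_h_of_finrank_eq_two hA
  rw [lie_add, lie_smul, lie_smul, hH, lie_lie_f_eq_smul t hH] at h
  have : (2 : ℂ) • b • ⁅F, v⁆ = 0 := by linear_combination (norm := module) -h
  rw [(smul_eq_zero.1 this).resolve_left two_ne_zero, add_zero]
  exact ⟨a, rfl⟩

end IsHighestWeightVector

namespace IsDecomp

variable [FiniteDimensional ℂ g] {s : LieSubalgebra ℂ g} {k : ℕ} {V : Fin k → Submodule ℂ g}
  {t : IsSl2Triple H E F} (hV : IsDecomp g s V) (ht : t.toLieSubalgebra ℂ = s)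
include hV ht

theorem odd_finrank_add_finrank_add_finrank {i j q : Fin k} (h : Rel V i j q) :
    (Module.finrank ℂ (V i) + Module.finrank ℂ (V j) + Module.finrank ℂ (V q)) % 2 = 1 := by
  obtain ⟨x, hx⟩ := hV.exists_isHighestWeightVector ht i
  obtain ⟨y, hy⟩ := hV.exists_isHighestWeightVector ht j
  obtain ⟨z, hz⟩ := hV.exists_isHighestWeightVector ht q
  have mem_iSup := h.le_of_forall_lie_mem (fun a ha b hb =>
    lie_mem_iSup_eigenspace (hx.le_iSup_eigenspace ha) (hy.le_iSup_eigenspace hb)) hz.mem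
  obtain ⟨⟨a, b⟩, hab⟩ := exists_eq_of_mem_iSup_eigenspace mem_iSup
    (Module.End.mem_eigenspace_iff.2 hz.lie_h) hz.ne_zero
  have : (Module.finrank ℂ (V q) + 2 * a + 2 * b + 1 : ℂ)
      = Module.finrank ℂ (V i) + Module.finrank ℂ (V j) := by linear_combination hab
  have : Module.finrank ℂ (V q) + 2 * (a : ℕ) + 2 * (b : ℕ) + 1
      = Module.finrank ℂ (V i) + Module.finrank ℂ (V j) := by exact_mod_cast this
  omega

theorem lie_lie_f_lie_f_ne_zero {a b c : Fin k} {u v : g} (hb : Module.finrank ℂ (V b) = 3)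
    (ha : Module.finrank ℂ (V a) = 2) (hc : Module.finrank ℂ (V c) = 2) (h : Rel V b a c)
    (hu : IsHighestWeightVector t (V b) u) (hv : IsHighestWeightVector t (V a) v) :
    ⁅⁅F, ⁅F, u⁆⁆, v⁆ ≠ 0 := by
  intro h0
  obtain ⟨w, hw⟩ := hV.exists_isHighestWeightVector ht c
  have hHu := hu.lie_h_of_finrank_eq_three hb
  have lie_uv : ⁅u, v⁆ = 0 := hw.eq_zero_of_finrank_eq_two hc (h.lie_mem hu.mem hv.mem)
    (lie_lie_eq_add_smul hHu (hv.lie_h_of_finrank_eq_two ha)) (by norm_num) (by norm_num)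
  have lie_e_f_f : ⁅E, ⁅F, ⁅F, u⁆⁆⁆ = (2 : ℂ) • ⁅F, u⁆ := by
    rw [leibniz_lie, leibniz_lie E F u, hu.lie_e, t.lie_e_f, lie_lie_f_eq_smul t hHu, hHu]
    simp
  have lie_Fuv : ⁅⁅F, u⁆, v⁆ = 0 := by
    have := leibniz_lie E ⁅F, ⁅F, u⁆⁆ v
    rw [h0, lie_zero, lie_e_f_f, hv.lie_e, lie_zero, add_zero, smul_lie] at this
    exact (smul_eq_zero.1 this.symm).resolve_left two_ne_zero
  refine hv.ne_zero (hV.eq_zero_of_forall_lie_eq_zero h.symm hv.mem fun y hy => ?_)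
  exact lie_eq_zero_comm.1 (hu.lie_eq_zero_of_finrank_eq_three hb lie_uv lie_Fuv h0 hy)

theorem rel_self_of_finrank_eq_three (hconv : Convention g V) {a b c z : Fin k}
    (hb : Module.finrank ℂ (V b) = 3) (ha : Module.finrank ℂ (V a) = 2)
    (hc : Module.finrank ℂ (V c) = 2) (h : Rel V b a c) (h' : Rel V b c z) :
    ∃ q, Rel V b b q := by
  by_contra! hcon
  have abelian : ∀ x ∈ V b, ∀ y ∈ V b, ⁅x, y⁆ = 0 := fun x hx y hy => by
    by_contra h0
    obtain ⟨q, hq⟩ := hconv.exists_rel hx hy h0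
    exact hcon q hq
  obtain ⟨-, -, hF⟩ := mem_of_toLieSubalgebra_eq ht
  obtain ⟨u, hu⟩ := hV.exists_isHighestWeightVector ht b
  obtain ⟨v, hv⟩ := hV.exists_isHighestWeightVector ht a
  obtain ⟨w, hw⟩ := hV.exists_isHighestWeightVector ht c
  have hHu := hu.lie_h_of_finrank_eq_three hb
  have hHv := hv.lie_h_of_finrank_eq_two ha
  have hFFu : ⁅F, ⁅F, u⁆⁆ ∈ V b := hV.lie_mem hF (hV.lie_mem hF hu.mem)
  -- `z₀` is a lowest weight vector of `V c`, and it commutes with `V b`.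
  set z₀ := ⁅⁅F, ⁅F, u⁆⁆, v⁆ with hz₀
  have mem_z₀ : z₀ ∈ V c := h.lie_mem hFFu hv.mem
  have lie_uv : ⁅u, v⁆ = 0 := hw.eq_zero_of_finrank_eq_two hc (h.lie_mem hu.mem hv.mem)
    (lie_lie_eq_add_smul hHu hHv) (by norm_num) (by norm_num)
  have lie_F : ⁅F, z₀⁆ = 0 := hw.eq_zero_of_finrank_eq_two hc (hV.lie_mem hF mem_z₀)
    (lie_lie_f_eq_smul t (lie_lie_eq_add_smul (lie_lie_f_eq_smul t (lie_lie_f_eq_smul t hHu)) hHv))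
    (by norm_num) (by norm_num)
  have lie_u : ⁅u, z₀⁆ = 0 := by
    rw [hz₀, leibniz_lie, abelian u hu.mem _ hFFu, lie_uv, zero_lie, lie_zero, add_zero]
  have lie_Fu : ⁅⁅F, u⁆, z₀⁆ = 0 := by rw [lie_lie, lie_u, lie_F, lie_zero, lie_zero, sub_zero]
  have lie_FFu : ⁅⁅F, ⁅F, u⁆⁆, z₀⁆ = 0 := by
    rw [lie_lie, lie_Fu, lie_F, lie_zero, lie_zero, sub_zero]
  refine hV.lie_lie_f_lie_f_ne_zero ht hb ha hc h hu hv
    (hV.eq_zero_of_forall_lie_eq_zero h'.symm mem_z₀ fun y hy => ?_)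
  exact lie_eq_zero_comm.1 (hu.lie_eq_zero_of_finrank_eq_three hb lie_u lie_Fu lie_FFu hy)

omit [FiniteDimensional ℂ g] in
theorem eq_zero_of_finrank_eq_one (hs : IsSimpleLevi g s) {i : Fin k}
    (hi : Module.finrank ℂ (V i) = 1) {x : g} (hx : x ∈ V i) {μ : ℂ} (h : ⁅H, x⁆ = μ • x)
    (hμ : μ ≠ 0) : x = 0 := by
  rw [hV.lie_eq_zero_of_finrank_eq_one hs hi (mem_of_toLieSubalgebra_eq ht).1 hx] at h
  exact (smul_eq_zero.1 h.symm).resolve_left hμ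

omit [FiniteDimensional ℂ g] in
theorem lie_lie_f_ne_zero (hs : IsSimpleLevi g s) {i j l : Fin k}
    (hi : Module.finrank ℂ (V i) = 2) (hj : Module.finrank ℂ (V j) = 2)
    (hl : Module.finrank ℂ (V l) = 1) (h : Rel V i j l) {x y : g}
    (hx : IsHighestWeightVector t (V i) x) (hy : IsHighestWeightVector t (V j) y) :
    ⁅x, ⁅F, y⁆⁆ ≠ 0 := by
  intro h0
  obtain ⟨-, -, hF⟩ := mem_of_toLieSubalgebra_eq ht
  have hHx := hx.lie_h_of_finrank_eq_two hi
  have hHy := hy.lie_h_of_finrank_eq_two hj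
  have lie_xy : ⁅x, y⁆ = 0 := hV.eq_zero_of_finrank_eq_one ht hs hl (h.lie_mem hx.mem hy.mem)
    (lie_lie_eq_add_smul hHx hHy) (by norm_num)
  have lie_FxFy : ⁅⁅F, x⁆, ⁅F, y⁆⁆ = 0 := hV.eq_zero_of_finrank_eq_one ht hs hl
    (h.lie_mem (hV.lie_mem hF hx.mem) (hV.lie_mem hF hy.mem))
    (lie_lie_eq_add_smul (lie_lie_f_eq_smul t hHx) (lie_lie_f_eq_smul t hHy)) (by norm_num)
  have lie_Fxy : ⁅⁅F, x⁆, y⁆ = 0 := by rw [lie_lie, lie_xy, h0, lie_zero, sub_zero]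
  refine hV.ne_bot l (eq_bot_iff.2 (h.le_of_forall_lie_mem fun x' hx' y' hy' => ?_))
  obtain ⟨a, b, rfl⟩ := hx.exists_eq_of_finrank_eq_two hi hx'
  obtain ⟨a', b', rfl⟩ := hy.exists_eq_of_finrank_eq_two hj hy'
  simp [lie_xy, h0, lie_Fxy, lie_FxFy]

omit [FiniteDimensional ℂ g] in
theorem lie_ne_zero_of_finrank_eq_one (hs : IsSimpleLevi g s) {i l q : Fin k}
    (hi : Module.finrank ℂ (V i) = 2) (hl : Module.finrank ℂ (V l) = 1) (h : Rel V l i q) {x z : g}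
    (hz : z ∈ V l) (hz0 : z ≠ 0) (hx : IsHighestWeightVector t (V i) x) : ⁅z, x⁆ ≠ 0 := by
  intro h0
  rw [lie_eq_zero_comm] at h0
  have lie_F : ⁅⁅F, x⁆, z⁆ = 0 := by
    rw [lie_lie, h0, lie_zero, hV.lie_eq_zero_of_finrank_eq_one hs hl
      (mem_of_toLieSubalgebra_eq ht).2.2 hz, lie_zero, sub_zero]
  exact hz0 (hV.eq_zero_of_forall_lie_eq_zero h hz fun y hy =>
    lie_eq_zero_comm.1 (hx.lie_eq_zero_of_finrank_eq_two hi h0 lie_F hy))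

theorem finrank_ne_one_of_rel_self (hs : IsSimpleLevi g s) {a l c r : Fin k}
    (ha : Module.finrank ℂ (V a) = 2) (hl : Module.finrank ℂ (V l) = 1) (h : Rel V a a l)
    (h' : Rel V a l c) (h'' : Rel V a c r) : Module.finrank ℂ (V r) ≠ 1 := by
  intro hr
  obtain ⟨-, -, hF⟩ := mem_of_toLieSubalgebra_eq ht
  obtain ⟨v, hv⟩ := hV.exists_isHighestWeightVector ht a
  have hHv := hv.lie_h_of_finrank_eq_two ha
  set z := ⁅v, ⁅F, v⁆⁆ with hz
  have mem_z : z ∈ V l := h.lie_mem hv.mem (hV.lie_mem hF hv.mem)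
  have lie_z {x : g} (hx : x ∈ s) : ⁅x, z⁆ = 0 :=
    hV.lie_eq_zero_of_finrank_eq_one hs hl hx mem_z
  have hHz : ⁅H, z⁆ = (0 : ℂ) • z := by
    rw [lie_z (mem_of_toLieSubalgebra_eq ht).1, zero_smul]
  set y := ⁅z, v⁆ with hy
  have hy0 : y ≠ 0 := hV.lie_ne_zero_of_finrank_eq_one ht hs ha hl h'.symm mem_z
    (hV.lie_lie_f_ne_zero ht hs ha ha hl h hv hv) hv
  have mem_y : y ∈ V c := h'.symm.lie_mem mem_z hv.mem
  have lie_vy : ⁅v, y⁆ = 0 := hV.eq_zero_of_finrank_eq_one ht hs hr (h''.lie_mem hv.mem mem_y)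
    (lie_lie_eq_add_smul hHv (lie_lie_eq_add_smul hHz hHv)) (by norm_num)
  have lie_Fy : ⁅F, y⁆ = ⁅z, ⁅F, v⁆⁆ := by rw [hy, leibniz_lie, lie_z hF, zero_lie, zero_add]
  -- Applying `ad F` to `⁅v, y⁆ = 0` and `ad z` to `⁅v, ⁅F, v⁆⁆ = z` gives two relations between
  -- `⁅⁅F, v⁆, y⁆` and `⁅v, ⁅F, y⁆⁆`, which force both brackets to vanish.
  have lie_Fv_y : ⁅⁅F, v⁆, y⁆ = 0 := by
    have h₁ : ⁅⁅F, v⁆, y⁆ + ⁅v, ⁅F, y⁆⁆ = 0 := by rw [← leibniz_lie, lie_vy, lie_zero]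
    have h₂ : ⁅y, ⁅F, v⁆⁆ + ⁅v, ⁅F, y⁆⁆ = 0 := by rw [lie_Fy, hy, ← leibniz_lie, ← hz, lie_self]
    rw [← lie_skew] at h₂
    have : (2 : ℂ) • ⁅⁅F, v⁆, y⁆ = 0 := by linear_combination (norm := module) h₁ - h₂
    exact (smul_eq_zero.1 this).resolve_left two_ne_zero
  refine hy0 (hV.eq_zero_of_forall_lie_eq_zero h''.symm mem_y fun x hx => ?_)
  exact lie_eq_zero_comm.1 (hv.lie_eq_zero_of_finrank_eq_two ha lie_vy lie_Fv_y hx)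

end IsDecomp

end Weight

/-! ### Vectors of weight one -/

section Polynomial

variable {K E E' : Type*} [Field K] [CharZero K] [AddCommGroup E] [Module K E] [AddCommGroup E']
  [Module K E'] {W : Submodule K E}

theorem apply_eq_zero_of_forall_self {B : E →ₗ[K] E →ₗ[K] E'}
    (symm : ∀ x ∈ W, ∀ y ∈ W, B x y = B y x) (h : ∀ x ∈ W, B x x = 0) {x y : E} (hx : x ∈ W)
    (hy : y ∈ W) : B x y = 0 := by
  have := h (x + y) (add_mem hx hy)
  simp only [map_add, LinearMap.add_apply, h x hx, h y hy, symm y hy x hx, zero_add, add_zero]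
    at this
  exact (smul_eq_zero.1 ((two_smul K _).trans this)).resolve_left two_ne_zero

theorem apply_apply_eq_zero_of_forall_self {T : E →ₗ[K] E →ₗ[K] E →ₗ[K] E'}
    (symm₁₂ : ∀ x ∈ W, ∀ y ∈ W, ∀ z ∈ W, T x y z = T y x z)
    (symm₂₃ : ∀ x ∈ W, ∀ y ∈ W, ∀ z ∈ W, T x y z = T x z y)
    (h : ∀ x ∈ W, T x x x = 0) {x y z : E} (hx : x ∈ W) (hy : y ∈ W) (hz : z ∈ W) :
    T x y z = 0 := by
  have diag {x y : E} (hx : x ∈ W) (hy : y ∈ W) : T x y y = 0 := by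
    have h₁ := h (y + x) (add_mem hy hx)
    have h₂ := h (y - x) (sub_mem hy hx)
    simp only [map_add, map_sub, LinearMap.add_apply, LinearMap.sub_apply, h x hx, h y hy,
      symm₁₂ y hy x hx y hy, symm₁₂ y hy x hx x hx, symm₂₃ x hx y hy x hx,
      symm₂₃ y hy y hy x hx] at h₁ h₂
    have : (6 : K) • T x y y = 0 := by linear_combination (norm := module) h₁ - h₂
    exact (smul_eq_zero.1 this).resolve_left (by norm_num)
  exact apply_eq_zero_of_forall_self (B := T x) (fun y hy z hz => symm₂₃ x hx y hy z hz)
    (fun y hy => diag hx hy) hy hz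

open _root_.Polynomial in
theorem self_eq_zero_of_smul_eq_zero {T : E →ₗ[K] E →ₗ[K] E →ₗ[K] K} {B : E →ₗ[K] E →ₗ[K] E'}
    (h : ∀ x ∈ W, T x x x • B x x = 0) {x y : E} (hx : x ∈ W) (hT : T x x x ≠ 0) (hy : y ∈ W) :
    B y y = 0 := by
  refine (Module.forall_dual_apply_eq_zero_iff K _).1 fun f => ?_
  set p : K[X] := C (T x x x) + C (T x x y + T x y x + T y x x) * X +
    C (T x y y + T y x y + T y y x) * X ^ 2 + C (T y y y) * X ^ 3 with hp
  set q : K[X] := C (f (B x x)) + C (f (B x y + B y x)) * X + C (f (B y y)) * X ^ 2 with hq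
  have mul_eq_zero : p * q = 0 := Polynomial.funext fun b => by
    have := congrArg f (h (x + b • y) (add_mem hx (W.smul_mem b hy)))
    simp only [map_add, map_smul, LinearMap.add_apply, LinearMap.smul_apply, map_zero,
      smul_eq_mul, hp, hq, eval_mul, eval_add, eval_C, eval_X, eval_pow, eval_zero] at this ⊢
    linear_combination this
  have p_ne_zero : p ≠ 0 := fun h0 => hT (by simpa [hp] using congrArg (coeff · 0) h0)
  simpa [hq, coeff_X, coeff_C] using
    congrArg (coeff · 2) ((_root_.mul_eq_zero.1 mul_eq_zero).resolve_left p_ne_zero)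

theorem forall_eq_zero_or_forall_eq_zero_of_smul_eq_zero {T : E →ₗ[K] E →ₗ[K] E →ₗ[K] K}
    {B : E →ₗ[K] E →ₗ[K] E'}
    (symm₁₂ : ∀ x ∈ W, ∀ y ∈ W, ∀ z ∈ W, T x y z = T y x z)
    (symm₂₃ : ∀ x ∈ W, ∀ y ∈ W, ∀ z ∈ W, T x y z = T x z y)
    (symm : ∀ x ∈ W, ∀ y ∈ W, B x y = B y x) (h : ∀ x ∈ W, T x x x • B x x = 0) :
    (∀ x ∈ W, ∀ y ∈ W, ∀ z ∈ W, T x y z = 0) ∨ ∀ x ∈ W, ∀ y ∈ W, B x y = 0 := by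
  by_cases hT : ∀ x ∈ W, T x x x = 0
  · exact .inl fun x hx y hy z hz =>
      apply_apply_eq_zero_of_forall_self symm₁₂ symm₂₃ hT hx hy hz
  · push Not at hT
    obtain ⟨x, hx, hTx⟩ := hT
    exact .inr fun y hy z hz =>
      apply_eq_zero_of_forall_self symm (fun w hw => self_eq_zero_of_smul_eq_zero h hx hTx hw) hy hz

omit [CharZero K] in
theorem trilinear_mem_of_mem_span {T : E →ₗ[K] E →ₗ[K] E →ₗ[K] E'} {A : Set E} {Z : Submodule K E'}
    (h : ∀ x ∈ A, ∀ y ∈ A, ∀ z ∈ A, T x y z ∈ Z) {x y z : E} (hx : x ∈ Submodule.span K A)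
    (hy : y ∈ Submodule.span K A) (hz : z ∈ Submodule.span K A) : T x y z ∈ Z := by
  have h₃ {x y : E} (hx : x ∈ A) (hy : y ∈ A) : Submodule.span K A ≤ Z.comap (T x y) :=
    Submodule.span_le.2 (h x hx y hy)
  have h₂ {x : E} (hx : x ∈ A) : Submodule.span K A ≤ Z.comap ((T x).flip z) :=
    Submodule.span_le.2 fun y hy => h₃ hx hy hz
  have h₁ : Submodule.span K A ≤ Z.comap ((T.flip y).flip z) :=
    Submodule.span_le.2 fun x hx => h₂ hx hy
  exact h₁ hx

end Polynomial

section WeightOne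

variable {g : Type*} [LieRing g] [LieAlgebra ℂ g] {H E F : g}

/-- The space of vectors of `H`-weight one in the radical of `g`. -/
def weightOne (H : g) : Submodule ℂ g :=
  (LieAlgebra.radical ℂ g).toSubmodule ⊓ (LieModule.toEnd ℂ g g H).eigenspace 1

/-- The trilinear map `⁅⁅x, ⁅F, y⁆⁆, w⁆`, which sends vectors of weight one to a vector of weight
one. -/
def tripleLie (F : g) : g →ₗ[ℂ] g →ₗ[ℂ] g →ₗ[ℂ] g :=
  (((LieModule.toEnd ℂ g g : g →ₗ[ℂ] g →ₗ[ℂ] g)).compl₂ (LieModule.toEnd ℂ g g F)).compr₂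
    (LieModule.toEnd ℂ g g : g →ₗ[ℂ] g →ₗ[ℂ] g)

theorem tripleLie_apply (F x y w : g) : tripleLie F x y w = ⁅⁅x, ⁅F, y⁆⁆, w⁆ :=
  rfl

theorem lie_of_mem_weightOne {x : g} (hx : x ∈ weightOne H) : ⁅H, x⁆ = (1 : ℂ) • x :=
  Module.End.mem_eigenspace_iff.1 hx.2

theorem IsHighestWeightVector.mem_weightOne {t : IsSl2Triple H E F} {s : LieSubalgebra ℂ g} {k : ℕ}
    {V : Fin k → Submodule ℂ g} (hV : IsDecomp g s V) {i : Fin k} {v : g}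
    (hv : IsHighestWeightVector t (V i) v) (hi : Module.finrank ℂ (V i) = 2) : v ∈ weightOne H :=
  ⟨hV.mem_radical hv.mem, Module.End.mem_eigenspace_iff.2 (hv.lie_h_of_finrank_eq_two hi)⟩

theorem tripleLie_mem_weightOne (t : IsSl2Triple H E F) {x y w : g} (hx : x ∈ weightOne H)
    (hy : y ∈ weightOne H) (hw : w ∈ weightOne H) : tripleLie F x y w ∈ weightOne H := by
  refine ⟨lie_mem_left ℂ g _ _ _ (lie_mem_left ℂ g _ _ _ hx.1), Module.End.mem_eigenspace_iff.2 ?_⟩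
  refine (lie_lie_eq_add_smul (lie_lie_eq_add_smul (lie_of_mem_weightOne hx)
    (lie_lie_f_eq_smul t (lie_of_mem_weightOne hy))) (lie_of_mem_weightOne hw)).trans ?_
  rw [tripleLie_apply]
  norm_num

namespace IsDecomp

variable [FiniteDimensional ℂ g] {s : LieSubalgebra ℂ g} {k : ℕ} {V : Fin k → Submodule ℂ g}
  {t : IsSl2Triple H E F} (hV : IsDecomp g s V) (ht : t.toLieSubalgebra ℂ = s)
  (hle : ∀ i, Module.finrank ℂ (V i) ≤ 2)
include hV ht hle

theorem eq_zero_of_mem_radical {x : g} {μ : ℂ} (hx : x ∈ LieAlgebra.radical ℂ g)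
    (h : ⁅H, x⁆ = μ • x) (h0 : μ ≠ 0) (h1 : μ ≠ 1) (h1' : μ ≠ -1) : x = 0 := by
  choose v hv using hV.exists_isHighestWeightVector ht
  have le_iSup : ⨆ i, V i ≤ ⨆ p : Σ i, Fin (Module.finrank ℂ (V i)),
      (LieModule.toEnd ℂ g g H).eigenspace
        ((Module.finrank ℂ (V p.1) : ℂ) - 1 - 2 * (p.2 : ℕ)) := by
    rw [iSup_sigma]
    exact iSup_mono fun i => (hv i).le_iSup_eigenspace
  have hx' : x ∈ ⨆ i, V i := hV.2.2.ge hx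
  by_contra hne
  obtain ⟨⟨i, n⟩, rfl⟩ :=
    exists_eq_of_mem_iSup_eigenspace (le_iSup hx') (Module.End.mem_eigenspace_iff.2 h) hne
  have := n.2
  have := hle i
  have : Module.finrank ℂ (V i) = 1 ∧ (n : ℕ) = 0 ∨ Module.finrank ℂ (V i) = 2 ∧ (n : ℕ) = 0 ∨
      Module.finrank ℂ (V i) = 2 ∧ (n : ℕ) = 1 := by omega
  rcases this with ⟨h, hn⟩ | ⟨h, hn⟩ | ⟨h, hn⟩
  · norm_num [h, hn] at h0
  · norm_num [h, hn] at h1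
  · norm_num [h, hn] at h1'

theorem lie_eq_zero_of_mem_weightOne {x y : g} (hx : x ∈ weightOne H) (hy : y ∈ weightOne H) :
    ⁅x, y⁆ = 0 :=
  hV.eq_zero_of_mem_radical ht hle (lie_mem_left ℂ g _ _ _ hx.1)
    (lie_lie_eq_add_smul (lie_of_mem_weightOne hx) (lie_of_mem_weightOne hy)) (by norm_num)
    (by norm_num) (by norm_num)

theorem lie_lie_f_comm {x y : g} (hx : x ∈ weightOne H) (hy : y ∈ weightOne H) :
    ⁅x, ⁅F, y⁆⁆ = ⁅y, ⁅F, x⁆⁆ := by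
  have := leibniz_lie F x y
  rw [hV.lie_eq_zero_of_mem_weightOne ht hle hx hy, lie_zero, ← lie_skew, eq_comm,
    neg_add_eq_zero] at this
  exact this.symm

theorem tripleLie_comm₁₂ {x y w : g} (hx : x ∈ weightOne H) (hy : y ∈ weightOne H) :
    tripleLie F x y w = tripleLie F y x w := by
  rw [tripleLie_apply, hV.lie_lie_f_comm ht hle hx hy, tripleLie_apply]

theorem tripleLie_comm₁₃ {x y w : g} (hx : x ∈ weightOne H) (hw : w ∈ weightOne H) :
    tripleLie F x y w = tripleLie F w y x := by
  rw [tripleLie_apply, lie_lie, hV.lie_eq_zero_of_mem_weightOne ht hle hx hw, lie_zero, sub_zero,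
    ← lie_skew, ← neg_lie, lie_skew, tripleLie_apply]

theorem tripleLie_comm₂₃ {x y w : g} (hx : x ∈ weightOne H) (hy : y ∈ weightOne H)
    (hw : w ∈ weightOne H) : tripleLie F x y w = tripleLie F x w y := by
  rw [hV.tripleLie_comm₁₂ ht hle hx hy, hV.tripleLie_comm₁₃ ht hle hy hw,
    hV.tripleLie_comm₁₂ ht hle hw hx]

theorem tripleLie_tripleLie_self {x : g} (hx : x ∈ weightOne H) :
    tripleLie F (tripleLie F x x x) x x = 0 := by
  have lie_FFx : ⁅x, ⁅F, ⁅F, x⁆⁆⁆ = 0 :=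
    hV.eq_zero_of_mem_radical ht hle (lie_mem_left ℂ g _ _ _ hx.1)
      (lie_lie_eq_add_smul (lie_of_mem_weightOne hx)
        (lie_lie_f_eq_smul t (lie_lie_f_eq_smul t (lie_of_mem_weightOne hx)))) (by norm_num)
      (by norm_num) (by norm_num)
  have lie_F : ⁅F, tripleLie F x x x⁆ = ⁅⁅x, ⁅F, x⁆⁆, ⁅F, x⁆⁆ := by
    rw [tripleLie_apply, leibniz_lie, leibniz_lie F x, lie_self, lie_FFx, add_zero, zero_lie,
      zero_add]
  have sum_eq_zero : ⁅tripleLie F x x x, ⁅F, x⁆⁆ + ⁅x, ⁅F, tripleLie F x x x⁆⁆ = 0 := by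
    rw [lie_F, tripleLie_apply, ← leibniz_lie, lie_self]
  rw [hV.lie_lie_f_comm ht hle hx (tripleLie_mem_weightOne t hx hx hx), ← two_smul ℂ]
    at sum_eq_zero
  rw [tripleLie_apply, (smul_eq_zero.1 sum_eq_zero).resolve_left two_ne_zero, zero_lie]

omit [FiniteDimensional ℂ g] hle in
theorem tripleLie_ne_zero (hs : IsSimpleLevi g s) {i j l m q : Fin k}
    (hi : Module.finrank ℂ (V i) = 2) (hj : Module.finrank ℂ (V j) = 2)
    (hl : Module.finrank ℂ (V l) = 1) (hm : Module.finrank ℂ (V m) = 2) (h : Rel V i j l)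
    (h' : Rel V l m q) {x y w : g} (hx : IsHighestWeightVector t (V i) x)
    (hy : IsHighestWeightVector t (V j) y) (hw : IsHighestWeightVector t (V m) w) :
    tripleLie F x y w ≠ 0 :=
  hV.lie_ne_zero_of_finrank_eq_one ht hs hm hl h'
    (h.lie_mem hx.mem (hV.lie_mem (mem_of_toLieSubalgebra_eq ht).2.2 hy.mem))
    (hV.lie_lie_f_ne_zero ht hs hi hj hl h hx hy) hw

omit [FiniteDimensional ℂ g] hle ht in
theorem exists_dual_eq_one_of_mem (hs : IsSimpleLevi g s) {c : Fin k} {x : g} (hx : x ∈ V c)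
    (h0 : x ≠ 0) : ∃ φ : Module.Dual ℂ g, φ x = 1 ∧ ∀ q ≠ c, ∀ y ∈ V q, φ y = 0 := by
  obtain ⟨f, hf⟩ := Module.Projective.exists_dual_eq_one ℂ h0
  refine ⟨f ∘ₗ hV.proj hs c, ?_, fun q hq y hy => ?_⟩
  · rw [LinearMap.comp_apply, hV.proj_of_mem hs hx, hf]
  · rw [LinearMap.comp_apply, hV.proj_of_mem_ne hs hq hy, map_zero]

omit [FiniteDimensional ℂ g] hle ht in
theorem lie_eq_zero_of_mem_radical (hconv : Convention g V) {q : Fin k}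
    (h : ∀ i r, ¬ Rel V q i r) {y u : g} (hy : y ∈ V q) (hu : u ∈ LieAlgebra.radical ℂ g) :
    ⁅y, u⁆ = 0 := by
  have le_ker : ⨆ i, V i ≤ LinearMap.ker (LieModule.toEnd ℂ g g y) := iSup_le fun i u hu => by
    by_contra h0
    obtain ⟨r, hr⟩ := hconv.exists_rel hy hu h0
    exact h i r hr
  exact le_ker (hV.2.2.ge hu)

omit [FiniteDimensional ℂ g] hle in
theorem lie_tripleLie_eq_smul (hconv : Convention g V) {G : Set (Fin k)} {c : Fin k}
    (hc : Module.finrank ℂ (V c) = 2) (hG : ∀ i ∈ G, Module.finrank ℂ (V i) = 2)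
    (h : ∀ i ∈ G, ∀ j ∈ G, ∀ l, Rel V i j l → ∀ m ∈ G, ∀ q, Rel V l m q →
      q = c ∨ ∀ i r, ¬ Rel V q i r)
    {v : Fin k → g} (hv : ∀ i, IsHighestWeightVector t (V i) (v i)) {φ : Module.Dual ℂ g}
    (hφ : φ (v c) = 1) (hφ' : ∀ q ≠ c, ∀ y ∈ V q, φ y = 0) {x y z u : g}
    (hx : x ∈ Submodule.span ℂ (v '' G)) (hy : y ∈ Submodule.span ℂ (v '' G))
    (hz : z ∈ Submodule.span ℂ (v '' G)) (hu : u ∈ LieAlgebra.radical ℂ g) :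
    ⁅tripleLie F x y z, u⁆ = φ (tripleLie F x y z) • ⁅v c, u⁆ := by
  refine trilinear_mem_of_mem_span (T := tripleLie F) (Z := LinearMap.eqLocus
    ((LieModule.toEnd ℂ g g : g →ₗ[ℂ] g →ₗ[ℂ] g).flip u) (φ.smulRight ⁅v c, u⁆)) ?_ hx hy hz
  rintro _ ⟨i, hi, rfl⟩ _ ⟨j, hj, rfl⟩ _ ⟨m, hm, rfl⟩
  change ⁅tripleLie F (v i) (v j) (v m), u⁆ = φ (tripleLie F (v i) (v j) (v m)) • ⁅v c, u⁆
  have mem_weightOne := tripleLie_mem_weightOne t ((hv i).mem_weightOne hV (hG i hi))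
    ((hv j).mem_weightOne hV (hG j hj)) ((hv m).mem_weightOne hV (hG m hm))
  by_cases h0 : tripleLie F (v i) (v j) (v m) = 0
  · rw [h0, zero_lie, map_zero, zero_smul]
  have hFj : ⁅F, v j⁆ ∈ V j := hV.lie_mem (mem_of_toLieSubalgebra_eq ht).2.2 (hv j).mem
  obtain ⟨l, hl⟩ := hconv.exists_rel (hv i).mem hFj fun h =>
    h0 (by rw [tripleLie_apply, h, zero_lie])
  have mem_l := hl.lie_mem (hv i).mem hFj
  obtain ⟨q, hq⟩ := hconv.exists_rel mem_l (hv m).mem h0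
  have mem_q : tripleLie F (v i) (v j) (v m) ∈ V q := hq.lie_mem mem_l (hv m).mem
  rcases eq_or_ne q c with rfl | hqc
  · obtain ⟨a, ha⟩ :=
      (hv q).exists_smul_eq_of_finrank_eq_two hc mem_q (lie_of_mem_weightOne mem_weightOne)
    rw [← ha, smul_lie, map_smul, hφ, smul_eq_mul, mul_one]
  · rw [hφ' q hqc _ mem_q, zero_smul]
    exact hV.lie_eq_zero_of_mem_radical hconv
      ((h i hi j hj l hl m hm q hq).resolve_left hqc) mem_q hu

theorem weight_one_cubic (hs : IsSimpleLevi g s) (hconv : Convention g V) {G : Set (Fin k)}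
    {c : Fin k} (hc : Module.finrank ℂ (V c) = 2) (hG : ∀ i ∈ G, Module.finrank ℂ (V i) = 2)
    (h : ∀ i ∈ G, ∀ j ∈ G, ∀ l, Rel V i j l → ∀ m ∈ G, ∀ q, Rel V l m q →
      q = c ∨ ∀ i r, ¬ Rel V q i r)
    (hex : ∃ i ∈ G, ∃ j ∈ G, ∃ l, Rel V i j l ∧ ∃ m ∈ G, Rel V l m c) :
    ∀ i ∈ G, ∀ l, Rel V c i l → ∀ j ∈ G, ∀ q, ¬ Rel V l j q := by
  choose v hv using hV.exists_isHighestWeightVector ht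
  obtain ⟨φ, hφ, hφ'⟩ := hV.exists_dual_eq_one_of_mem hs (hv c).mem (hv c).ne_zero
  have mem_weightOne {i : Fin k} (hi : Module.finrank ℂ (V i) = 2) : v i ∈ weightOne H :=
    (hv i).mem_weightOne hV hi
  have output {i j l : Fin k} (hi : Module.finrank ℂ (V i) = 2)
      (hj : Module.finrank ℂ (V j) = 2) (h : Rel V i j l) : Module.finrank ℂ (V l) = 1 := by
    have := hV.odd_finrank_add_finrank_add_finrank ht h
    have := hle l
    grind
  set W := Submodule.span ℂ (v '' G)
  have mem_W {i : Fin k} (hi : i ∈ G) : v i ∈ W := Submodule.subset_span ⟨i, hi, rfl⟩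
  have hW {x : g} (hx : x ∈ W) : x ∈ weightOne H :=
    Submodule.span_le.2 (Set.image_subset_iff.2 fun i hi => mem_weightOne (hG i hi)) hx
  have smul_eq_zero : ∀ x ∈ W, φ (tripleLie F x x x) • tripleLie F (v c) x x = 0 := fun x hx => by
    rw [tripleLie_apply F (v c), ← smul_lie, ← hV.lie_tripleLie_eq_smul ht hconv hc hG h hv hφ
      hφ' hx hx hx (lie_mem_right ℂ g _ _ _ (hW hx).1)]
    exact hV.tripleLie_tripleLie_self ht hle (hW hx)
  rcases forall_eq_zero_or_forall_eq_zero_of_smul_eq_zero (W := W)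
    (T := (tripleLie F).compr₂ (LinearMap.compRight ℂ φ)) (B := tripleLie F (v c))
    (fun x hx y hy z _ => congrArg φ (hV.tripleLie_comm₁₂ ht hle (hW hx) (hW hy)))
    (fun x hx y hy z hz => congrArg φ (hV.tripleLie_comm₂₃ ht hle (hW hx) (hW hy) (hW hz)))
    (fun x hx y hy => hV.tripleLie_comm₂₃ ht hle (mem_weightOne hc) (hW hx) (hW hy))
    smul_eq_zero with hT | hB
  · obtain ⟨i, hi, j, hj, l, hl, m, hm, hq⟩ := hex
    refine absurd ?_ (hV.tripleLie_ne_zero ht hs (hG i hi) (hG j hj)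
      (output (hG i hi) (hG j hj) hl) (hG m hm) hl hq (hv i) (hv j) (hv m))
    have mem_c : tripleLie F (v i) (v j) (v m) ∈ V c := hq.lie_mem (hl.lie_mem (hv i).mem
      (hV.lie_mem (mem_of_toLieSubalgebra_eq ht).2.2 (hv j).mem)) (hv m).mem
    obtain ⟨a, ha⟩ := (hv c).exists_smul_eq_of_finrank_eq_two hc mem_c (lie_of_mem_weightOne
      (tripleLie_mem_weightOne t (hW (mem_W hi)) (hW (mem_W hj)) (hW (mem_W hm))))
    have a_eq_zero : φ (a • v c) = 0 := ha ▸ hT _ (mem_W hi) _ (mem_W hj) _ (mem_W hm)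
    rw [map_smul, hφ, smul_eq_mul, mul_one] at a_eq_zero
    rw [← ha, a_eq_zero, zero_smul]
  · exact fun i hi l hl j hj q hq => hV.tripleLie_ne_zero ht hs hc (hG i hi)
      (output hc (hG i hi) hl) (hG j hj) hl hq (hv c) (hv i) (hv j)
      (hB _ (mem_W hi) _ (mem_W hj))

end IsDecomp

end WeightOne

theorem IsDecomp.sl2Table {g : Type*} [LieRing g] [LieAlgebra ℂ g] [FiniteDimensional ℂ g]
    {s : LieSubalgebra ℂ g} {k : ℕ} {V : Fin k → Submodule ℂ g} (hg : IsSympathetic g)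
    (hrad : LieAlgebra.radical ℂ g ≠ ⊥) (hV : IsDecomp g s V) (hs : IsSimpleLevi g s)
    (hc : Convention g V) {H E F : g} {t : IsSl2Triple H E F} (ht : t.toLieSubalgebra ℂ = s) :
    Sl2Table (fun i => Module.finrank ℂ (V i)) (Rel V) where
  toBracketTable := hV.bracketTable hg hrad hs hc
  parity := hV.odd_finrank_add_finrank_add_finrank ht
  dim_eq_of_trivial ht h := hV.finrank_eq_of_finrank_eq_one h ht
  dim_eq_of_trivial_output ht h := hV.finrank_eq_of_finrank_output_eq_one h ht
  dim_self_of_two {i q} hi h :=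
    le_antisymm (by simpa [hi] using h.finrank_le_choose_two) (hV.one_le_finrank q)
  dim_self_of_three {i q} hi h := by
    have finrank_le : Module.finrank ℂ (V q) ≤ 3 := by
      simpa [hi, Nat.choose] using h.finrank_le_choose_two
    have finrank_ne_one : Module.finrank ℂ (V q) ≠ 1 := fun hq => by
      simpa [hi, Nat.even_iff] using hV.even_finrank_of_rel_self h hq
    have := hV.odd_finrank_add_finrank_add_finrank ht h
    omega
  self_rel_of_trivial := hV.rel_self_of_finrank_eq_one hc
  self_rel_of_three := hV.rel_self_of_finrank_eq_three ht hc
  dim_ne_one_of_self := hV.finrank_ne_one_of_rel_self ht hs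
  weight_one_cubic hle _ _ := hV.weight_one_cubic ht hle hs hc

/-! ### Dimensions of simple Lie algebras and of their modules -/

section RootPairing

variable {ι K M N : Type*} [Field K] [CharZero K] [AddCommGroup M] [Module K M]
  [AddCommGroup N] [Module K N] (P : RootPairing ι K M N)

theorem two_mul_card_le_card_of_pairwise_linearIndependent [Fintype ι] {κ : Type*} [Fintype κ]
    {e : κ → ι} (h : Pairwise fun a b => LinearIndependent K ![P.root (e a), P.root (e b)]) :
    2 * Fintype.card κ ≤ Fintype.card ι := by
  have eq_of_smul_eq {a b : κ} (ε : K) (hab : P.root (e a) = ε • P.root (e b)) : a = b := by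
    by_contra hne
    have := LinearIndependent.pair_iff.1 (h hne) 1 (-ε) (by rw [hab]; module)
    exact one_ne_zero this.1
  have root_neg (a : ι) : P.root (P.reflectionPerm a a) = -P.root a := by
    rw [P.root_reflectionPerm, P.reflection_apply_self]
  have ne_neg {a b : κ} : e a ≠ P.reflectionPerm (e b) (e b) := fun hab => by
    have hroot : P.root (e a) = -P.root (e b) := hab ▸ root_neg (e b)
    obtain rfl := eq_of_smul_eq (-1) (hroot.trans (neg_one_smul K _).symm)
    exact P.ne_neg _ hab
  let f : κ ⊕ κ → ι := Sum.elim e fun a => P.reflectionPerm (e a) (e a)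
  have hf : Function.Injective f := by
    rintro (a | a) (b | b) (hab : _ = _)
    · exact congrArg _ (eq_of_smul_eq 1 (by rw [one_smul]; exact congrArg P.root hab))
    · exact absurd hab ne_neg
    · exact absurd hab.symm ne_neg
    · have hroot : -P.root (e a) = -P.root (e b) := by
        rw [← root_neg, ← root_neg]
        exact congrArg P.root hab
      exact congrArg _ (eq_of_smul_eq 1 (by rw [one_smul, neg_inj.1 hroot]))
  simpa [two_mul] using Fintype.card_le_of_injective f hf

theorem exists_reflection_root_notMem_span [P.IsIrreducible] (h : 2 ≤ Module.finrank K M) (i : ι) :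
    ∃ j, P.reflection j (P.root i) ∉ Submodule.span K {P.root i} := by
  by_contra! hcon
  have span_eq_top : Submodule.span K {P.root i} = ⊤ :=
    RootPairing.IsIrreducible.eq_top_of_invtSubmodule_reflection (P := P) _
      (fun j => by simpa [Module.End.mem_invtSubmodule, Submodule.span_le] using hcon j)
      (by simpa using P.ne_zero i)
  have := finrank_span_singleton (K := K) (P.ne_zero i)
  rw [span_eq_top, finrank_top] at this
  omega

theorem six_le_card_of_isIrreducible [Fintype ι] [Nonempty ι] [P.IsIrreducible]
    (h : 2 ≤ Module.finrank K M) : 6 ≤ Fintype.card ι := by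
  obtain ⟨i⟩ := ‹Nonempty ι›
  obtain ⟨j, hj⟩ := exists_reflection_root_notMem_span P h i
  have root_eq : P.root (P.reflectionPerm j i) = P.root i + -P.pairing i j • P.root j := by
    rw [P.root_reflectionPerm, P.reflection_apply_root, neg_smul, sub_eq_add_neg]
  rw [← P.root_reflectionPerm, root_eq] at hj
  have pairing_ne_zero : P.pairing i j ≠ 0 := fun h0 =>
    hj (by simp [h0, Submodule.mem_span_singleton_self])
  have hij : LinearIndependent K ![P.root i, P.root j] :=
    (LinearIndependent.pair_iff' (P.ne_zero i)).2 fun a ha => hj <| ha ▸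
      add_mem (Submodule.mem_span_singleton_self _)
        (Submodule.smul_mem _ _ (Submodule.smul_mem _ _ (Submodule.mem_span_singleton_self _)))
  have hik : LinearIndependent K ![P.root i, P.root (P.reflectionPerm j i)] := by
    simpa [root_eq, pairing_ne_zero, hij] using
      LinearIndependent.pair_add_smul_add_smul_iff (R := K) (x := P.root i) (y := P.root j) 1 0 1
        (-P.pairing i j)
  have hjk : LinearIndependent K ![P.root j, P.root (P.reflectionPerm j i)] := by
    simpa [root_eq, hij] using
      LinearIndependent.pair_add_smul_add_smul_iff (R := K) (x := P.root i) (y := P.root j) 0 1 1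
        (-P.pairing i j)
  refine two_mul_card_le_card_of_pairwise_linearIndependent P (e := ![i, j, P.reflectionPerm j i])
    fun a b hab => ?_
  fin_cases a <;> fin_cases b <;>
    first | exact absurd rfl hab | assumption | exact LinearIndependent.pair_symm_iff.1 ‹_›

end RootPairing

section Killing

open LieAlgebra LieAlgebra.IsKilling LieModule Module

variable {K L : Type*} [Field K] [CharZero K] [LieRing L] [LieAlgebra K L] [FiniteDimensional K L]

omit [CharZero K] in
theorem exists_smul_eq_of_finrank_le_one {E : Type*} [AddCommGroup E] [Module K E]
    [FiniteDimensional K E] (h : finrank K E ≤ 1) {x : E} (hx : x ≠ 0) (y : E) :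
    ∃ a : K, a • x = y :=
  (finrank_eq_one_iff_of_nonzero' x hx).1
    (h.antisymm (finrank_pos_iff_exists_ne_zero.2 ⟨x, hx⟩)) y

theorem finrank_cartan_add_card_root [IsKilling K L] (C : LieSubalgebra K L)
    [C.IsCartanSubalgebra] [IsTriangularizable K C L] :
    finrank K C + (LieSubalgebra.root (H := C)).card = finrank K L := by
  let w : Option (LieSubalgebra.root (H := C)) → C → K := fun o => o.elim 0 fun α => α.1
  have hw : Function.Injective w := by
    rintro (_ | α) (_ | β) h
    · rfl
    · exact absurd h.symm (C.isNonZero_coe_root β)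
    · exact absurd h (C.isNonZero_coe_root α)
    · exact congrArg some (Subtype.ext (DFunLike.coe_injective h))
  have indep : iSupIndep fun o => (rootSpace C (w o)).toSubmodule :=
    LieSubmodule.iSupIndep_toSubmodule.2 ((iSupIndep_genWeightSpace K C L).comp hw)
  have iSup_eq_top : ⨆ o, (rootSpace C (w o)).toSubmodule = ⊤ := by
    rw [← LieSubmodule.iSup_toSubmodule, LieSubmodule.toSubmodule_eq_top, ← top_le_iff,
      ← cartan_sup_iSup_rootSpace_eq_top C]
    refine sup_le ?_ (iSup₂_le fun α hα => ?_)
    · exact (rootSpace_zero_eq K L C).ge.trans (le_iSup (fun o => rootSpace C (w o)) none)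
    · exact le_iSup (fun o => rootSpace C (w o)) (some ⟨α, by simpa using hα⟩)
  have finrank_root (α : LieSubalgebra.root (H := C)) : finrank K (rootSpace C α.1) = 1 :=
    finrank_rootSpace_eq_one α.1 (C.isNonZero_coe_root α)
  have finrank_zero : finrank K (rootSpace C (0 : C → K)) = finrank K C := by
    rw [rootSpace_zero_eq]
    rfl
  have := finrank_iSup_eq_sum indep
  rw [iSup_eq_top, finrank_top, Fintype.sum_option] at this
  calc finrank K C + (LieSubalgebra.root (H := C)).card
      = finrank K (rootSpace C (0 : C → K)) +
          ∑ α : LieSubalgebra.root (H := C), finrank K (rootSpace C α.1) := by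
        simp only [finrank_zero, finrank_root, Finset.sum_const, Finset.card_univ, smul_eq_mul,
          mul_one, Fintype.card_coe]
    _ = finrank K L := this.symm

variable [IsSimple K L] (C : LieSubalgebra K L) [C.IsCartanSubalgebra] [IsTriangularizable K C L]

theorem nonempty_root_of_isSimple : Nonempty (LieSubalgebra.root (H := C)) := by
  have := RootPairing.IsIrreducible.nontrivial (rootSystem C)
  by_contra h
  rw [not_nonempty_iff] at h
  have := RootPairing.IsRootSystem.span_root_eq_top (P := rootSystem C)
  rw [Set.range_eq_empty, Submodule.span_empty] at this
  exact bot_ne_top this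

include C in
theorem three_le_finrank_of_isSimple : 3 ≤ finrank K L := by
  obtain ⟨α⟩ := nonempty_root_of_isSimple C
  have two_le_card := two_mul_card_le_card_of_pairwise_linearIndependent (rootSystem C)
    (e := fun _ : Unit => α) fun _ _ h => absurd rfl h
  have finrank_cartan_pos := (finrank_pos_iff_exists_ne_zero (R := K)).2
    ⟨coroot α.1, (rootSystem C).ne_zero' α⟩
  have := finrank_cartan_add_card_root C
  simp only [Fintype.card_coe, Fintype.card_unit] at two_le_card
  omega

theorem eight_le_finrank_of_two_le_finrank_cartan (h : 2 ≤ finrank K C) : 8 ≤ finrank K L := by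
  have := nonempty_root_of_isSimple C
  have six_le_card := six_le_card_of_isIrreducible (rootSystem C)
    (h.trans_eq Subspace.dual_finrank_eq.symm)
  have := finrank_cartan_add_card_root C
  rw [Fintype.card_coe] at six_le_card
  omega

theorem sl2SubmoduleOfRoot_eq_top_of_finrank_cartan_le_one (h : finrank K C ≤ 1)
    {α : Weight K C L} (hα : α.IsNonZero) : sl2SubmoduleOfRoot hα = ⊤ := by
  rw [sl2SubmoduleOfRoot_eq_sup, ← top_le_iff, ← cartan_sup_iSup_rootSpace_eq_top C]
  refine sup_le (fun x hx => ?_) (iSup₂_le fun β hβ => ?_)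
  · have coroot_ne_zero : coroot α ≠ 0 := (rootSystem C).ne_zero' ⟨α, by simpa using hα⟩
    obtain ⟨a, ha⟩ := exists_smul_eq_of_finrank_le_one h coroot_ne_zero ⟨x, hx⟩
    obtain rfl : a • (coroot α : L) = x := congrArg Subtype.val ha
    exact LieSubmodule.mem_sup_right (Submodule.smul_mem _ a (coe_coroot_mem_corootSubmodule α))
  · obtain ⟨c, hc⟩ : ∃ c : K, (β : C → K) = c • (α : C → K) := by
      have root_ne_zero : α.toLinear ≠ 0 := (rootSystem C).ne_zero ⟨α, by simpa using hα⟩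
      obtain ⟨c, hc⟩ := exists_smul_eq_of_finrank_le_one
        (Subspace.dual_finrank_eq.trans_le h) root_ne_zero β.toLinear
      exact ⟨c, congrArg DFunLike.coe hc.symm⟩
    rcases eq_neg_or_eq_of_eq_smul α β hβ c hc with rfl | rfl
    · exact le_sup_of_le_left le_sup_right
    · exact le_sup_of_le_left le_sup_left

theorem exists_isSl2Triple_toLieSubalgebra_eq_top (h : finrank K C ≤ 1) :
    ∃ (h e f : L) (t : IsSl2Triple h e f), t.toLieSubalgebra K = ⊤ := by
  obtain ⟨α⟩ := nonempty_root_of_isSimple C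
  have hα := C.isNonZero_coe_root α
  obtain ⟨_, e, f, t, he, hf⟩ := exists_isSl2Triple_of_weight_isNonZero hα
  refine ⟨_, e, f, t, top_le_iff.1 fun x _ => ?_⟩
  rw [IsSl2Triple.mem_toLieSubalgebra_iff, ← mem_sl2SubalgebraOfRoot_iff hα t he hf]
  exact (sl2SubmoduleOfRoot_eq_top_of_finrank_cartan_le_one C h hα).ge (LieSubmodule.mem_top x)

theorem eight_le_finrank_or_exists_isSl2Triple (K L : Type*) [Field K]
    [CharZero K] [IsAlgClosed K] [LieRing L] [LieAlgebra K L] [FiniteDimensional K L]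
    [IsSimple K L] : 8 ≤ finrank K L ∨
      3 ≤ finrank K L ∧ ∃ (h e f : L) (t : IsSl2Triple h e f), t.toLieSubalgebra K = ⊤ := by
  obtain ⟨x, hx⟩ := exists_isCartanSubalgebra_engel K L
  rcases le_or_gt 2 (finrank K (LieSubalgebra.engel K x)) with h | h
  · exact .inl (eight_le_finrank_of_two_le_finrank_cartan _ h)
  · exact .inr ⟨three_le_finrank_of_isSimple (LieSubalgebra.engel K x),
      exists_isSl2Triple_toLieSubalgebra_eq_top _ (Nat.lt_succ_iff.1 h)⟩

end Killing

theorem finrank_eq_one_of_isIrreducible_of_isTrivial {K L M : Type*} [Field K] [LieRing L]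
    [AddCommGroup M] [Module K M] [LieRingModule L M] [LieModule.IsIrreducible K L M]
    [LieModule.IsTrivial L M] : Module.finrank K M = 1 := by
  have := LieModule.nontrivial_of_isIrreducible K L M
  obtain ⟨v, hv⟩ := exists_ne (0 : M)
  let W : LieSubmodule K L M :=
    { K ∙ v with
      lie_mem := fun {x m} _ => (trivial_lie_zero L M x m).symm ▸ (K ∙ v).zero_mem }
  have mem_W : v ∈ W := Submodule.mem_span_singleton_self v
  have W_eq_top : W = ⊤ := (IsSimpleOrder.eq_bot_or_eq_top W).resolve_left fun h =>
    hv (by simpa [h] using mem_W)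
  exact finrank_eq_one v hv fun w =>
    Submodule.mem_span_singleton.1 (W_eq_top.ge (LieSubmodule.mem_top w))

theorem finrank_le_sq_of_isIrreducible {K L M : Type*} [Field K] [LieRing L] [LieAlgebra K L]
    [LieAlgebra.IsSimple K L] [AddCommGroup M] [Module K M] [LieRingModule L M] [LieModule K L M]
    [FiniteDimensional K M] [LieModule.IsIrreducible K L M] (hM : Module.finrank K M ≠ 1) :
    Module.finrank K L ≤ Module.finrank K M ^ 2 := by
  rcases LieAlgebra.IsSimple.eq_bot_or_eq_top (R := K) (LieModule.ker K L M) with h | h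
  · have := (LieModule.isFaithful_iff_ker_eq_bot K L M).2 h
    exact (LinearMap.finrank_le_finrank_of_injective
      (f := (LieModule.toEnd K L M : L →ₗ[K] Module.End K M))
      LieModule.IsFaithful.injective_toEnd).trans_eq
      ((Module.finrank_linearMap K K M M).trans (sq _).symm)
  · have : LieModule.IsTrivial L M := ⟨fun x m =>
      (LieModule.mem_ker K L M x).1 (h.ge (LieSubmodule.mem_top x)) m⟩
    exact absurd (finrank_eq_one_of_isIrreducible_of_isTrivial (L := L)) hM

theorem exists_isSl2Triple_coe_toLieSubalgebra_eq {K L : Type*} [CommRing K] [LieRing L]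
    [LieAlgebra K L] {s : LieSubalgebra K L} {h e f : s} {t : IsSl2Triple h e f}
    (ht : t.toLieSubalgebra K = ⊤) :
    ∃ t : IsSl2Triple (h : L) e f, t.toLieSubalgebra K = s := by
  refine ⟨⟨fun h0 => t.h_ne_zero (Subtype.ext h0), congrArg Subtype.val t.lie_e_f,
    congrArg Subtype.val t.lie_h_e_nsmul, congrArg Subtype.val t.lie_h_f_nsmul⟩,
    le_antisymm (fun x hx => ?_) fun x hx => ?_⟩
  · obtain ⟨a, b, c, rfl⟩ := IsSl2Triple.mem_toLieSubalgebra_iff.1 hx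
    exact (a • e + b • f + c • ⁅e, f⁆).2
  · obtain ⟨a, b, c, h⟩ :=
      IsSl2Triple.mem_toLieSubalgebra_iff.1 (ht.ge (LieSubalgebra.mem_top (⟨x, hx⟩ : s)))
    exact IsSl2Triple.mem_toLieSubalgebra_iff.2 ⟨a, b, c, congrArg Subtype.val h⟩

theorem IsDecomp.finrank_ne_two {g : Type*} [LieRing g] [LieAlgebra ℂ g] [FiniteDimensional ℂ g]
    {s : LieSubalgebra ℂ g} {k : ℕ} {V : Fin k → Submodule ℂ g} (hV : IsDecomp g s V)
    (hs : IsSimpleLevi g s) (h : 5 ≤ Module.finrank ℂ s) (i : Fin k) :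
    Module.finrank ℂ (V i) ≠ 2 := fun hi => by
  have := hs.1
  have := hV.isIrreducible_lieSubmodule i
  have le_sq := finrank_le_sq_of_isIrreducible (K := ℂ) (L := s) (M := hV.lieSubmodule i)
    (hi.trans_ne (by decide))
  change _ ≤ Module.finrank ℂ (V i) ^ 2 at le_sq
  rw [hi] at le_sq
  omega

end Symp

theorem stmt17_general (g : Type*) [LieRing g] [LieAlgebra ℂ g] [FiniteDimensional ℂ g]
    (hsymp : Symp.IsSympathetic g) (hnss : LieAlgebra.radical ℂ g ≠ ⊥)
    (s : LieSubalgebra ℂ g) (hs : Symp.IsSimpleLevi g s)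
    (k : ℕ) (V : Fin k → Submodule ℂ g)
    (hdec : Symp.IsDecomp g s V) (hconv : Symp.Convention g V) :
    15 ≤ Module.finrank ℂ g := by
  have finrank_eq := hdec.finrank_levi_add_sum hs
  have := hs.1
  rcases Symp.eight_le_finrank_or_exists_isSl2Triple ℂ s with h8 | ⟨h3, h, e, f, t, ht⟩
  · have := (hdec.bracketTable hsymp hnss hs hconv).seven_le_sum
      (hdec.finrank_ne_two hs (by omega))
    omega
  · obtain ⟨t, ht⟩ := Symp.exists_isSl2Triple_coe_toLieSubalgebra_eq ht
    have := (hdec.sl2Table hsymp hnss hs hconv ht).twelve_le_sum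
    omega

/-- a non-semisimple sympathetic Lie algebra with simple Levi subalgebra,
whose radical decomposes into simple modules satisfying the convention, and such that the
centre of the radical is irreducible whenever there are at least 5 summands, has
dimension ≥ 15. -/
theorem stmt17 (g : Type*) [LieRing g] [LieAlgebra ℂ g] [FiniteDimensional ℂ g]
    (hsymp : Symp.IsSympathetic g)
    (hnss : LieAlgebra.radical ℂ g ≠ ⊥)
    (s : LieSubalgebra ℂ g) (hs : Symp.IsSimpleLevi g s)
    (k : ℕ) (V : Fin k → Submodule ℂ g) (hdec : Symp.IsDecomp g s V)
    (hconv : Symp.Convention g V)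
    (hk5 : 5 ≤ k → Symp.IsIrreducibleSMod g s (Symp.centerRad g)) :
    15 ≤ Module.finrank ℂ g :=
  stmt17_general g hsymp hnss s hs k V hdec hconv
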